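/- arXiv:2409.15258 — 6 statements merged into one kernel-verified Lean document; each statement's English description precedes it below -/
import Mathlib

section
/- Let r ≥ 4 and let G be a rainbow K_r-saturated graph. Then for any two vertices u, v of G with uv not an edge of G, at least one of the following holds: (1) u and v have at least r − 1 common neighbors, or (2) deg(u) + deg(v) ≥ r(r−1)/2 − 1. -/
open SimpleGraph

/-- A proper edge-coloring of `G`: distinct edges sharing a vertex get distinct colors. -/
def IsProperEdgeColoring {V : Type} (G : SimpleGraph V) (c : Sym2 V → ℕ) : Prop :=
  ∀ e₁ ∈ G.edgeSet, ∀ e₂ ∈ G.edgeSet, e₁ ≠ e₂ → (∃ v, v ∈ e₁ ∧ v ∈ e₂) → c e₁ ≠ c e₂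

/-- `G` contains a rainbow copy of `H` under the edge-coloring `c`. -/
def HasRainbowCopy {V W : Type} (G : SimpleGraph V) (H : SimpleGraph W)
    (c : Sym2 V → ℕ) : Prop :=
  ∃ f : W → V, Function.Injective f ∧ (∀ a b, H.Adj a b → G.Adj (f a) (f b)) ∧
    ∀ e₁ ∈ H.edgeSet, ∀ e₂ ∈ H.edgeSet, e₁ ≠ e₂ → c (Sym2.map f e₁) ≠ c (Sym2.map f e₂)

/-- `G` is (properly) rainbow `H`-saturated. -/
def IsRainbowSat {V W : Type} (G : SimpleGraph V) (H : SimpleGraph W) : Prop :=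
  (∃ c : Sym2 V → ℕ, IsProperEdgeColoring G c ∧ ¬ HasRainbowCopy G H c) ∧
  ∀ u v : V, u ≠ v → ¬ G.Adj u v →
    ∀ c : Sym2 V → ℕ,
      IsProperEdgeColoring (G ⊔ SimpleGraph.fromEdgeSet {s(u, v)}) c →
      HasRainbowCopy (G ⊔ SimpleGraph.fromEdgeSet {s(u, v)}) H c

/-!
Let `c` be a proper coloring of `G` without a rainbow `K_r`, and let `k` be a color missing at both
`u` and `v`. Giving `uv` the color `k` extends `c` to a proper coloring of `G + uv`, so by
saturation some `r`-clique of `G + uv` through `u` and `v` is rainbow. If `u` and `v` have at most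
`r - 2` common neighbors, this clique can only be `{u, v}` together with all of them, whatever `k`
is. Hence no edge of this one clique other than `uv` has a color missing at both `u` and `v`: its
`r(r-1)/2 - 1` other edges, which have distinct colors, use only colors present at `u` or `v`, and
there are at most `deg u + deg v` of those.
-/

theorem encard_le_of_injOn_update {α β : Type*} [DecidableEq α] {c : α → β} {a : α} {E : Set α}
    {B : Set β} (ha : a ∈ E) (hB : B ≠ Set.univ)
    (hinj : ∀ k ∉ B, Set.InjOn (Function.update c a k) E) : E.encard ≤ B.encard + 1 := by
  have update_eq {e : α} (he : e ∈ E \ {a}) (k : β) : Function.update c a k e = c e :=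
    Function.update_of_ne he.2 k c
  have mapsTo : Set.MapsTo c (E \ {a}) B := by
    intro e he
    by_contra hce
    refine he.2 (hinj (c e) hce he.1 ha ?_)
    rw [update_eq he, Function.update_self]
  have injOn : Set.InjOn c (E \ {a}) := by
    obtain ⟨k, hk⟩ := (Set.ne_univ_iff_exists_notMem B).1 hB
    exact ((hinj k hk).mono Set.sdiff_subset).congr fun e he ↦ update_eq he k
  calc
    E.encard = (E \ {a}).encard + 1 := (Set.encard_sdiff_singleton_add_one ha).symm
    _ ≤ B.encard + 1 := by gcongr; exact Set.encard_le_encard_of_injOn mapsTo injOn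

/-- The edges of the complete graph on the vertex set `S`, as unordered pairs; a clique on `S` is
rainbow when the coloring is injective on them. -/
def cliqueEdges {V : Type*} (S : Finset V) : Set (Sym2 V) :=
  S.sym2 \ Sym2.diagSet

/-- The set of colors that appear on the edges of `G` at the vertex `v`. -/
def colorsAt {V α : Type*} (G : SimpleGraph V) (c : Sym2 V → α) (v : V) : Set α :=
  c '' G.incidenceSet v

section CliqueEdges

variable {V : Type*}

theorem mk_mem_cliqueEdges {S : Finset V} {x y : V} :
    s(x, y) ∈ cliqueEdges S ↔ (x ∈ S ∧ y ∈ S) ∧ x ≠ y := by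
  simp [cliqueEdges]

theorem cliqueEdges_map {W : Type*} [Fintype W] (f : W ↪ V) :
    cliqueEdges (Finset.univ.map f) = Sym2.map f '' (⊤ : SimpleGraph W).edgeSet := by
  ext e
  induction e with | _ x y
  simp only [mk_mem_cliqueEdges, Finset.mem_map, Finset.mem_univ, true_and]
  constructor
  · rintro ⟨⟨⟨a, rfl⟩, ⟨b, rfl⟩⟩, hab⟩
    exact ⟨s(a, b), fun h ↦ hab (congrArg f h), Sym2.map_mk f a b⟩
  · rintro ⟨⟨a, b⟩, hab, h⟩
    rcases Sym2.eq_iff.1 h with ⟨rfl, rfl⟩ | ⟨rfl, rfl⟩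
    · exact ⟨⟨⟨a, rfl⟩, ⟨b, rfl⟩⟩, f.injective.ne hab⟩
    · exact ⟨⟨⟨b, rfl⟩, ⟨a, rfl⟩⟩, f.injective.ne (Ne.symm hab)⟩

theorem encard_cliqueEdges (S : Finset V) : (cliqueEdges S).encard = S.card.choose 2 := by
  let val : S ↪ V := .subtype (· ∈ S)
  have map_val : Finset.univ.map val = S := by
    rw [← Finset.attach_eq_univ, Finset.attach_map_val]
  calc
    (cliqueEdges S).encard = (cliqueEdges (Finset.univ.map val)).encard := by rw [map_val]
    _ = (Sym2.diagSetᶜ : Set (Sym2 S)).encard := by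
      rw [cliqueEdges_map, edgeSet_top, (Sym2.map.injective val.injective).encard_image]
    _ = S.card.choose 2 := by
      rw [← (Set.toFinite _).cast_ncard_eq, Sym2.ncard_diagSet_compl, Nat.card_eq_finsetCard]

theorem encard_colorsAt_le {α : Type*} (G : SimpleGraph V) (c : Sym2 V → α) (v : V) :
    (colorsAt G c v).encard ≤ (G.neighborSet v).encard := by
  classical
  exact (Set.encard_image_le _ _).trans_eq (Set.encard_congr (G.incidenceSetEquivNeighborSet v))

end CliqueEdges

section AddEdge

variable {V : Type*} {G : SimpleGraph V} {u v : V}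

theorem mem_edgeSet_of_mem_edgeSet_sup_fromEdgeSet_singleton {e e₀ : Sym2 V}
    (he : e ∈ (G ⊔ fromEdgeSet {e₀}).edgeSet) (hne : e ≠ e₀) : e ∈ G.edgeSet := by
  rw [edgeSet_sup, edgeSet_fromEdgeSet] at he
  exact he.resolve_right fun h ↦ hne h.1

theorem subset_insert_insert_commonNeighbors {S : Set V}
    (hS : (G ⊔ fromEdgeSet {s(u, v)}).IsClique S) (hu : u ∈ S) (hv : v ∈ S) :
    S ⊆ insert u (insert v (G.commonNeighbors u v)) := by
  intro x hx
  by_cases hxu : x = u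
  · exact .inl hxu
  by_cases hxv : x = v
  · exact .inr (.inl hxv)
  have adj {w : V} (hw : w ∈ S) (hwx : w ≠ x) : G.Adj w x :=
    mem_edgeSet_of_mem_edgeSet_sup_fromEdgeSet_singleton (e₀ := s(u, v)) (hS hw hx hwx)
      (ne_of_mem_of_not_mem' (Sym2.mem_mk_right w x) (by simp [hxu, hxv]))
  exact .inr (.inr ⟨adj hu (Ne.symm hxu), adj hv (Ne.symm hxv)⟩)

theorem eq_insert_insert_commonNeighbors {S : Finset V} {r : ℕ}
    (hS : (G ⊔ fromEdgeSet {s(u, v)}).IsNClique r S) (hu : u ∈ S) (hv : v ∈ S)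
    (hr : (G.commonNeighbors u v).encard + 1 < r) :
    (S : Set V) = insert u (insert v (G.commonNeighbors u v)) := by
  refine S.finite_toSet.eq_of_subset_of_encard_le
    (subset_insert_insert_commonNeighbors hS.isClique hu hv) ?_
  calc
    (insert u (insert v (G.commonNeighbors u v))).encard
        ≤ (G.commonNeighbors u v).encard + 1 + 1 := by
      grw [Set.encard_insert_le, Set.encard_insert_le]
    _ ≤ r := Order.add_one_le_of_lt hr
    _ = (S : Set V).encard := by rw [Set.encard_coe_eq_coe_finsetCard, hS.card_eq]

end AddEdge

section Rainbow

variable {V : Type} {G : SimpleGraph V} {c : Sym2 V → ℕ} {u v : V} {k : ℕ}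

theorem hasRainbowCopy_top_iff {W : Type} [Fintype W] :
    HasRainbowCopy G (⊤ : SimpleGraph W) c ↔
      ∃ S, G.IsNClique (Fintype.card W) S ∧ Set.InjOn c (cliqueEdges S) := by
  constructor
  · rintro ⟨f, hf, hadj, hrainbow⟩
    lift f to W ↪ V using hf
    refine ⟨Finset.univ.map f, ⟨?_, Finset.card_map f⟩, ?_⟩
    · simpa using isClique_range_copy_top ⟨⟨f, hadj _ _⟩, f.injective⟩
    · rw [cliqueEdges_map]
      exact Set.InjOn.image_of_comp fun e₁ h₁ e₂ h₂ ↦ not_imp_not.1 (hrainbow e₁ h₁ e₂ h₂)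
  · rintro ⟨S, hS, hrainbow⟩
    have e : W ≃ S := Fintype.equivOfCardEq (by rw [Fintype.card_coe, hS.card_eq])
    let f : W ↪ V := e.toEmbedding.trans (.subtype (· ∈ S))
    have map_f : Finset.univ.map f = S := by
      rw [← Finset.map_map, Finset.map_univ_equiv, ← Finset.attach_eq_univ, Finset.attach_map_val]
    rw [← map_f, cliqueEdges_map] at hrainbow
    refine ⟨f, f.injective, fun a b hab ↦ hS.isClique (e a).2 (e b).2 (f.injective.ne hab), ?_⟩
    intro e₁ h₁ e₂ h₂ hne hcol
    exact hne (Sym2.map.injective f.injective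
      (hrainbow (Set.mem_image_of_mem _ h₁) (Set.mem_image_of_mem _ h₂) hcol))

theorem IsProperEdgeColoring.update_of_notMem_colorsAt [DecidableEq V]
    (hc : IsProperEdgeColoring G c) (hu : k ∉ colorsAt G c u) (hv : k ∉ colorsAt G c v) :
    IsProperEdgeColoring (G ⊔ fromEdgeSet {s(u, v)}) (Function.update c s(u, v) k) := by
  have ne_of_adjacent : ∀ e ∈ G.edgeSet, (∃ x, x ∈ e ∧ x ∈ s(u, v)) → c e ≠ k := by
    rintro e he ⟨x, hx, hxuv⟩ hek
    rcases Sym2.mem_iff.1 hxuv with rfl | rfl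
    · exact hu ⟨e, ⟨he, hx⟩, hek⟩
    · exact hv ⟨e, ⟨he, hx⟩, hek⟩
  intro e₁ h₁ e₂ h₂ hne hshare
  have old {e} (he : e ∈ (G ⊔ fromEdgeSet {s(u, v)}).edgeSet) (hne : e ≠ s(u, v)) :
      e ∈ G.edgeSet := mem_edgeSet_of_mem_edgeSet_sup_fromEdgeSet_singleton he hne
  rcases eq_or_ne e₁ s(u, v) with rfl | hne₁
  · rw [Function.update_self, Function.update_of_ne hne.symm]
    exact (ne_of_adjacent e₂ (old h₂ hne.symm) (by simpa only [and_comm] using hshare)).symm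
  rw [Function.update_of_ne hne₁]
  rcases eq_or_ne e₂ s(u, v) with rfl | hne₂
  · rw [Function.update_self]
    exact ne_of_adjacent e₁ (old h₁ hne₁) hshare
  · rw [Function.update_of_ne hne₂]
    exact hc e₁ (old h₁ hne₁) e₂ (old h₂ hne₂) hne hshare

theorem exists_rainbow_clique_through_pair [DecidableEq V] {r : ℕ}
    (hfree : ¬ HasRainbowCopy G (⊤ : SimpleGraph (Fin r)) c)
    (hcopy : HasRainbowCopy (G ⊔ fromEdgeSet {s(u, v)}) (⊤ : SimpleGraph (Fin r))
      (Function.update c s(u, v) k)) :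
    ∃ S, (G ⊔ fromEdgeSet {s(u, v)}).IsNClique r S ∧ u ∈ S ∧ v ∈ S ∧
      Set.InjOn (Function.update c s(u, v) k) (cliqueEdges S) := by
  rw [hasRainbowCopy_top_iff, Fintype.card_fin] at hfree hcopy
  obtain ⟨S, hS, hrainbow⟩ := hcopy
  suffices huv : s(u, v) ∈ cliqueEdges S from
    have := (mk_mem_cliqueEdges.1 huv).1
    ⟨S, hS, this.1, this.2, hrainbow⟩
  by_contra huv
  have ne_uv {e : Sym2 V} (he : e ∈ cliqueEdges S) : e ≠ s(u, v) := ne_of_mem_of_not_mem he huv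
  refine hfree ⟨S, ⟨fun x hx y hy hxy ↦ ?_, hS.card_eq⟩,
    hrainbow.congr fun e he ↦ Function.update_of_ne (ne_uv he) k c⟩
  exact mem_edgeSet_of_mem_edgeSet_sup_fromEdgeSet_singleton (hS.isClique hx hy hxy)
    (ne_uv (mk_mem_cliqueEdges.2 ⟨⟨hx, hy⟩, hxy⟩))

theorem exists_rainbow_clique_of_notMem_colorsAt [DecidableEq V] {r : ℕ}
    (hc : IsProperEdgeColoring G c) (hfree : ¬ HasRainbowCopy G (⊤ : SimpleGraph (Fin r)) c)
    (hsat : ∀ c' : Sym2 V → ℕ, IsProperEdgeColoring (G ⊔ fromEdgeSet {s(u, v)}) c' →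
      HasRainbowCopy (G ⊔ fromEdgeSet {s(u, v)}) (⊤ : SimpleGraph (Fin r)) c')
    (hk : k ∉ colorsAt G c u ∪ colorsAt G c v) :
    ∃ S, (G ⊔ fromEdgeSet {s(u, v)}).IsNClique r S ∧ u ∈ S ∧ v ∈ S ∧
      Set.InjOn (Function.update c s(u, v) k) (cliqueEdges S) :=
  exists_rainbow_clique_through_pair hfree <| hsat _ <|
    hc.update_of_notMem_colorsAt (fun h ↦ hk (.inl h)) (fun h ↦ hk (.inr h))

theorem choose_two_le_encard_colorsAt_union {r : ℕ}
    (hc : IsProperEdgeColoring G c) (hfree : ¬ HasRainbowCopy G (⊤ : SimpleGraph (Fin r)) c)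
    (hsat : ∀ c' : Sym2 V → ℕ, IsProperEdgeColoring (G ⊔ fromEdgeSet {s(u, v)}) c' →
      HasRainbowCopy (G ⊔ fromEdgeSet {s(u, v)}) (⊤ : SimpleGraph (Fin r)) c')
    (huv : u ≠ v) (hcommon : (G.commonNeighbors u v).encard + 1 < r) :
    (r.choose 2 : ℕ∞) ≤ (colorsAt G c u ∪ colorsAt G c v).encard + 1 := by
  classical
  by_cases huniv : colorsAt G c u ∪ colorsAt G c v = Set.univ
  · simp [huniv, Set.infinite_univ.encard_eq]
  have exists_clique {k : ℕ} (hk : k ∉ colorsAt G c u ∪ colorsAt G c v) :=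
    exists_rainbow_clique_of_notMem_colorsAt hc hfree hsat hk
  obtain ⟨k₀, hk₀⟩ := (Set.ne_univ_iff_exists_notMem _).1 huniv
  obtain ⟨S, hS, hu, hv, -⟩ := exists_clique hk₀
  rw [← hS.card_eq, ← encard_cliqueEdges]
  have uv_mem : s(u, v) ∈ cliqueEdges S := mk_mem_cliqueEdges.2 ⟨⟨hu, hv⟩, huv⟩
  refine encard_le_of_injOn_update (c := c) uv_mem huniv fun k hk ↦ ?_
  obtain ⟨T, hT, hu', hv', hrainbow⟩ := exists_clique hk
  have eq_clique : T = S := Finset.coe_injective <|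
    (eq_insert_insert_commonNeighbors hT hu' hv' hcommon).trans
      (eq_insert_insert_commonNeighbors hS hu hv hcommon).symm
  exact eq_clique ▸ hrainbow

end Rainbow

theorem stmt_0_general {V : Type} {G : SimpleGraph V} {r : ℕ} {u v : V}
    (hsat : IsRainbowSat G (⊤ : SimpleGraph (Fin r))) (huv : u ≠ v) (hne : ¬ G.Adj u v) :
    (r : ℕ∞) ≤ (G.commonNeighbors u v).encard + 1 ∨
      (r.choose 2 : ℕ∞) ≤ (G.neighborSet u).encard + (G.neighborSet v).encard + 1 := by
  obtain ⟨⟨c, hc, hfree⟩, hsat⟩ := hsat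
  refine or_iff_not_imp_left.2 fun hcommon ↦ ?_
  calc
    (r.choose 2 : ℕ∞) ≤ (colorsAt G c u ∪ colorsAt G c v).encard + 1 :=
      choose_two_le_encard_colorsAt_union hc hfree (hsat u v huv hne) huv (not_le.1 hcommon)
    _ ≤ (G.neighborSet u).encard + (G.neighborSet v).encard + 1 := by
      grw [Set.encard_union_le, encard_colorsAt_le, encard_colorsAt_le]

/-- If `G` is rainbow `K_r`-saturated (`r ≥ 4`) and `u v` is a non-edge,
then `u, v` have at least `r - 1` common neighbors, or
`deg u + deg v ≥ r(r-1)/2 - 1`. -/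
theorem stmt_0 {V : Type} [Fintype V] (r : ℕ) (hr : 4 ≤ r) (G : SimpleGraph V)
    (hsat : IsRainbowSat G (⊤ : SimpleGraph (Fin r)))
    (u v : V) (huv : u ≠ v) (hne : ¬ G.Adj u v) :
    r - 1 ≤ (G.neighborSet u ∩ G.neighborSet v).ncard ∨
    r * (r - 1) / 2 - 1 ≤ (G.neighborSet u).ncard + (G.neighborSet v).ncard := by
  simpa only [commonNeighbors, ← (Set.toFinite _).cast_ncard_eq, ← Nat.choose_two_right,
    tsub_le_iff_right, ← Nat.cast_add, ← Nat.cast_add_one, Nat.cast_le]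
    using stmt_0_general hsat huv hne
end

section
/- Let r ≥ 4 and t ≥ r − 1. If G is an n-vertex rainbow K_r-saturated graph with minimum degree exactly t, then the number of edges of G satisfies e(G) ≥ (r − 2)(n − t) + (t − (r − 2))(n − t − 1)/2 + (r − 2)(r − 3)/2. -/
open SimpleGraph

/-!
Give a new edge `uv` a color that occurs nowhere else. The resulting rainbow `K_r` must use `uv`,
so any two non-adjacent vertices have a common `(r - 2)`-clique in their neighborhoods.

Let `v` have minimum degree `t`, and let `W` be the set of its `n - t - 1` non-neighbors. The
vertices of `W` contribute at least `t |W|` to the degree sum. The degree sum over `N(v)` equals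
`∑ x, |N(x) ∩ N(v)|`, in which `v` contributes `t`, every vertex of `W` at least `r - 2`, and the
vertices of an `(r - 2)`-clique inside `N(v)` at least `r - 3` each. If `W` is empty, there is no
non-adjacent pair to provide this clique, but then `G` is complete because `t` is the minimum
degree.
-/

section RainbowColoring

variable {V W : Type} {G : SimpleGraph V} {H : SimpleGraph W} {u v : V}

theorem IsProperEdgeColoring.update_sup_edge [DecidableEq V] {c : Sym2 V → ℕ} {m : ℕ}
    (hc : IsProperEdgeColoring G c) (hm : ∀ e ∈ G.edgeSet, c e ≠ m) :
    IsProperEdgeColoring (G ⊔ edge u v) (Function.update c s(u, v) m) := by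
  have mem_of_ne : ∀ e ∈ (G ⊔ edge u v).edgeSet, e ≠ s(u, v) → e ∈ G.edgeSet := by
    intro e he hne
    rw [edgeSet_sup] at he
    exact he.resolve_right fun h ↦ hne (edgeSet_edge_subset h)
  intro e₁ he₁ e₂ he₂ hne hshare
  by_cases h₁ : e₁ = s(u, v)
  · have h₂ : e₂ ≠ s(u, v) := h₁ ▸ hne.symm
    simpa [h₁, h₂] using (hm e₂ (mem_of_ne e₂ he₂ h₂)).symm
  by_cases h₂ : e₂ = s(u, v)
  · simpa [h₁, h₂] using hm e₁ (mem_of_ne e₁ he₁ h₁)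
  · simpa [h₁, h₂] using hc e₁ (mem_of_ne e₁ he₁ h₁) e₂ (mem_of_ne e₂ he₂ h₂) hne hshare

theorem IsRainbowSat.exists_copy_using_nonedge (hG : IsRainbowSat G H) (huv : Gᶜ.Adj u v) :
    ∃ f : Copy H (G ⊔ edge u v), ∃ e ∈ H.edgeSet, Sym2.map f e = s(u, v) := by
  classical
  obtain ⟨⟨c, hc, hfree⟩, hsat⟩ := hG
  -- Shifting `c` by one frees the color `0` for the new edge.
  have hsucc : IsProperEdgeColoring G (fun e ↦ c e + 1) := fun e₁ he₁ e₂ he₂ hne hshare ↦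
    Nat.succ_injective.ne (hc e₁ he₁ e₂ he₂ hne hshare)
  obtain ⟨f, hf, hadj, hrainbow⟩ := hsat u v huv.1 huv.2 _
    (hsucc.update_sup_edge fun e _ ↦ Nat.succ_ne_zero (c e))
  refine ⟨⟨⟨f, hadj _ _⟩, hf⟩, ?_⟩
  by_contra! havoid
  refine hfree ⟨f, hf, fun a b hab ↦ ?_, fun e₁ he₁ e₂ he₂ hne ↦ ?_⟩
  · exact (hadj a b hab).resolve_right fun h ↦
      havoid s(a, b) hab (edgeSet_edge_subset ((mem_edgeSet _).2 h))
  · have hcolor := hrainbow e₁ he₁ e₂ he₂ hne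
    rwa [Function.update_of_ne, Function.update_of_ne, Nat.succ_ne_succ_iff] at hcolor
    exacts [havoid e₂ he₂, havoid e₁ he₁]

end RainbowColoring

section CommonCliques

variable {V : Type*} {G : SimpleGraph V} {k : ℕ}

/-- Any two distinct non-adjacent vertices of `G` have `k` pairwise adjacent common neighbors.
This is the only consequence of rainbow `K_{k+2}`-saturation used for counting edges. -/
def HasCommonCliques (G : SimpleGraph V) (k : ℕ) : Prop :=
  ∀ ⦃u v⦄, Gᶜ.Adj u v → ∃ S : Finset V, G.IsNClique k S ∧ ↑S ⊆ G.commonNeighbors u v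

theorem exists_isNClique_subset_commonNeighbors_of_sup_edge {u v : V} {T : Finset V}
    (hT : (G ⊔ edge u v).IsNClique (k + 2) T) (hu : u ∈ T) (hv : v ∈ T) (huv : u ≠ v) :
    ∃ S : Finset V, G.IsNClique k S ∧ ↑S ⊆ G.commonNeighbors u v := by
  classical
  have hTu : G.IsNClique (k + 1) (T.erase u) := hT.erase_of_sup_edge_of_mem hu
  have hTv : G.IsNClique (k + 1) (T.erase v) := (edge_comm u v ▸ hT).erase_of_sup_edge_of_mem hv
  have hvTu : v ∈ T.erase u := Finset.mem_erase.2 ⟨huv.symm, hv⟩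
  have huTv : u ∈ T.erase v := Finset.mem_erase.2 ⟨huv, hu⟩
  refine ⟨(T.erase u).erase v, hTu.erase_of_mem hvTu, fun x hx ↦ ?_⟩
  obtain ⟨hxv, hxu, hxT⟩ : x ≠ v ∧ x ≠ u ∧ x ∈ T := by simpa [and_comm, and_assoc] using hx
  exact ⟨hTv.1 huTv (Finset.mem_erase.2 ⟨hxv, hxT⟩) hxu.symm,
    hTu.1 hvTu (Finset.mem_erase.2 ⟨hxu, hxT⟩) hxv.symm⟩

theorem IsRainbowSat.hasCommonCliques {V : Type} {G : SimpleGraph V}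
    (hG : IsRainbowSat G (⊤ : SimpleGraph (Fin (k + 2)))) : HasCommonCliques G k := by
  intro u v huv
  obtain ⟨f, e, -, hfe⟩ := hG.exists_copy_using_nonedge huv
  have hclique : (G ⊔ edge u v).IsNClique (k + 2) (Finset.univ.map f.toEmbedding) := by
    simpa using isNClique_map_copy_top f
  have mem_of_mem_edge : ∀ x ∈ s(u, v), x ∈ Finset.univ.map f.toEmbedding := by
    intro x hx
    obtain ⟨i, -, hi⟩ := Sym2.mem_map.1 (hfe ▸ hx)
    exact Finset.mem_map.2 ⟨i, Finset.mem_univ i, hi⟩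
  exact exists_isNClique_subset_commonNeighbors_of_sup_edge hclique
    (mem_of_mem_edge u (Sym2.mem_mk_left u v)) (mem_of_mem_edge v (Sym2.mem_mk_right u v)) huv.1

theorem eq_top_of_isUniversal_of_forall_degree_le [Fintype V] [DecidableRel G.Adj] {v : V}
    (huniv : G.IsUniversal v) (hmin : ∀ x, G.degree v ≤ G.degree x) : G = ⊤ := by
  refine eq_top_iff_forall_ne_adj.2 fun x y hxy ↦ ?_
  have hx : G.degree x = Fintype.card V - 1 :=
    le_antisymm (Nat.le_sub_one_of_lt (G.degree_lt_card_verts x))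
      ((G.degree_eq_card_sub_one v).2 huniv ▸ hmin x)
  exact (G.degree_eq_card_sub_one x).1 hx hxy

theorem HasCommonCliques.exists_isNClique_subset_neighborFinset [Fintype V] [DecidableRel G.Adj]
    (hG : HasCommonCliques G k) {v : V} (hmin : ∀ x, G.degree v ≤ G.degree x)
    (hk : k ≤ G.degree v) :
    ∃ S, G.IsNClique k S ∧ S ⊆ G.neighborFinset v := by
  by_cases huniv : G.IsUniversal v
  · obtain ⟨S, hS, hcard⟩ := Finset.exists_subset_card_eq hk
    exact ⟨S, ⟨eq_top_of_isUniversal_of_forall_degree_le huniv hmin ▸ IsClique.top _, hcard⟩, hS⟩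
  · obtain ⟨w, hvw, hadj⟩ : ∃ w, v ≠ w ∧ ¬G.Adj v w := by simpa [IsUniversal] using huniv
    obtain ⟨S, hS, hcommon⟩ := hG ((G.compl_adj v w).2 ⟨hvw, hadj⟩)
    exact ⟨S, hS, fun x hx ↦ (G.mem_neighborFinset v x).2 (hcommon hx).1⟩

end CommonCliques

section DegreeSums

open Finset

variable {V : Type*} [Fintype V] [DecidableEq V] {G : SimpleGraph V} [DecidableRel G.Adj] {k : ℕ}

theorem sum_eq_add_sum_neighborFinset_add_sum_compl_neighborFinset {M : Type*} [AddCommMonoid M]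
    (G : SimpleGraph V) [DecidableRel G.Adj] (f : V → M) (v : V) :
    ∑ x, f x = f v + ∑ x ∈ G.neighborFinset v, f x + ∑ x ∈ Gᶜ.neighborFinset v, f x := by
  have hcompl : Gᶜ.neighborFinset v = (insert v (G.neighborFinset v))ᶜ := by
    ext x; simp [eq_comm]
  rw [hcompl, ← sum_insert (G.notMem_neighborFinset_self v), sum_add_sum_compl]

theorem sum_degree_eq_sum_card_neighborFinset_inter (G : SimpleGraph V) [DecidableRel G.Adj]
    (s : Finset V) : ∑ u ∈ s, G.degree u = ∑ x, #(G.neighborFinset x ∩ s) := by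
  have habove (u : V) : G.neighborFinset u = univ.bipartiteAbove G.Adj u := by
    ext; simp
  have hbelow (x : V) : G.neighborFinset x ∩ s = s.bipartiteBelow G.Adj x := by
    ext; simp [and_comm, G.adj_comm]
  calc ∑ u ∈ s, G.degree u = ∑ u ∈ s, #(univ.bipartiteAbove G.Adj u) := by
        simp only [← habove, card_neighborFinset_eq_degree]
    _ = ∑ x, #(s.bipartiteBelow G.Adj x) := sum_card_bipartiteAbove_eq_sum_card_bipartiteBelow _
    _ = ∑ x, #(G.neighborFinset x ∩ s) := by simp only [hbelow]

theorem mul_pred_le_sum_card_neighborFinset_inter {S s : Finset V} (hS : G.IsNClique k S)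
    (hSs : S ⊆ s) : k * (k - 1) ≤ ∑ x ∈ s, #(G.neighborFinset x ∩ s) := by
  have hinter : ∀ x ∈ S, k - 1 ≤ #(G.neighborFinset x ∩ s) := by
    intro x hx
    rw [← (hS.erase_of_mem hx).card_eq]
    refine card_le_card fun y hy ↦ ?_
    obtain ⟨hyx, hyS⟩ := mem_erase.1 hy
    simpa using ⟨hS.1 hx hyS hyx.symm, hSs hyS⟩
  calc k * (k - 1) = #S • (k - 1) := by rw [hS.card_eq, smul_eq_mul]
    _ ≤ ∑ x ∈ S, #(G.neighborFinset x ∩ s) := card_nsmul_le_sum _ _ _ hinter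
    _ ≤ ∑ x ∈ s, #(G.neighborFinset x ∩ s) := sum_le_sum_of_subset hSs

namespace HasCommonCliques

theorem le_card_neighborFinset_inter (hG : HasCommonCliques G k) {v w : V} (hvw : Gᶜ.Adj v w) :
    k ≤ #(G.neighborFinset w ∩ G.neighborFinset v) := by
  obtain ⟨S, hS, hcommon⟩ := hG hvw
  rw [← hS.card_eq]
  exact card_le_card fun x hx ↦ by simpa using (hcommon hx).symm

theorem le_sum_degree_neighborFinset (hG : HasCommonCliques G k) {v : V}
    (hmin : ∀ x, G.degree v ≤ G.degree x) (hk : k ≤ G.degree v) :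
    G.degree v + k * (k - 1) + Gᶜ.degree v * k ≤ ∑ u ∈ G.neighborFinset v, G.degree u := by
  obtain ⟨S, hS, hSv⟩ := hG.exists_isNClique_subset_neighborFinset hmin hk
  rw [sum_degree_eq_sum_card_neighborFinset_inter,
    sum_eq_add_sum_neighborFinset_add_sum_compl_neighborFinset G _ v, inter_self,
    card_neighborFinset_eq_degree]
  gcongr
  · exact mul_pred_le_sum_card_neighborFinset_inter hS hSv
  · exact card_nsmul_le_sum _ _ _ fun w hw ↦
      hG.le_card_neighborFinset_inter ((Gᶜ.mem_neighborFinset v w).1 hw)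

theorem le_two_mul_card_edgeFinset (hG : HasCommonCliques G k) {v : V}
    (hmin : ∀ x, G.degree v ≤ G.degree x) (hk : k ≤ G.degree v) :
    2 * G.degree v + k * (k - 1) + Gᶜ.degree v * (k + G.degree v) ≤ 2 * #G.edgeFinset := by
  have hcompl : Gᶜ.degree v * G.degree v ≤ ∑ w ∈ Gᶜ.neighborFinset v, G.degree w :=
    card_nsmul_le_sum _ _ _ fun w _ ↦ hmin w
  calc 2 * G.degree v + k * (k - 1) + Gᶜ.degree v * (k + G.degree v)
      = G.degree v + (G.degree v + k * (k - 1) + Gᶜ.degree v * k)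
          + Gᶜ.degree v * G.degree v := by ring
    _ ≤ G.degree v + ∑ u ∈ G.neighborFinset v, G.degree u
          + ∑ w ∈ Gᶜ.neighborFinset v, G.degree w := by
        gcongr
        exact hG.le_sum_degree_neighborFinset hmin hk
    _ = ∑ x, G.degree x :=
        (sum_eq_add_sum_neighborFinset_add_sum_compl_neighborFinset G (G.degree ·) v).symm
    _ = 2 * #G.edgeFinset := G.sum_degrees_eq_twice_card_edges

end HasCommonCliques

end DegreeSums

theorem stmt_2_general {V : Type} [Fintype V] {r t : ℕ} (hr : 2 ≤ r) (ht : r - 2 ≤ t)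
    {G : SimpleGraph V} (hsat : IsRainbowSat G (⊤ : SimpleGraph (Fin r)))
    (hmin : ∀ v : V, t ≤ (G.neighborSet v).ncard)
    (hexact : ∃ v : V, (G.neighborSet v).ncard = t) :
    ((r : ℝ) - 2) * ((Fintype.card V : ℝ) - t)
        + ((t : ℝ) - ((r : ℝ) - 2)) * ((Fintype.card V : ℝ) - t + 1) / 2
        + ((r : ℝ) - 2) * ((r : ℝ) - 3) / 2
      ≤ (G.edgeSet.ncard : ℝ) := by
  classical
  have hdeg (x : V) : (G.neighborSet x).ncard = G.degree x := Set.ncard_eq_toFinset_card' _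
  have hedges : G.edgeSet.ncard = G.edgeFinset.card := Set.ncard_eq_toFinset_card' _
  simp only [hdeg] at hmin hexact
  obtain ⟨k, rfl⟩ := Nat.exists_eq_add_of_le' hr
  obtain ⟨v, rfl⟩ := hexact
  have hcount := hsat.hasCommonCliques.le_two_mul_card_edgeFinset hmin ht
  have hcard : Fintype.card V = G.degree v + Gᶜ.degree v + 1 := by
    have := G.degree_lt_card_verts v
    rw [degree_compl]
    omega
  have hpred : (k : ℝ) * ((k - 1 : ℕ) : ℝ) = k * (k - 1) := by
    cases k <;> simp
  rify at hcount
  rw [hpred] at hcount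
  rw [hedges, hcard]
  push_cast
  linarith

/-- Edge lower bound for rainbow `K_r`-saturated graphs with minimum
degree exactly `t ≥ r - 1`. -/
theorem stmt_2 {V : Type} [Fintype V] (r t n : ℕ) (hr : 4 ≤ r) (ht : r - 1 ≤ t)
    (hn : Fintype.card V = n) (G : SimpleGraph V)
    (hsat : IsRainbowSat G (⊤ : SimpleGraph (Fin r)))
    (hmin : ∀ v : V, t ≤ (G.neighborSet v).ncard)
    (hexact : ∃ v : V, (G.neighborSet v).ncard = t) :
    ((r : ℝ) - 2) * ((n : ℝ) - t) + ((t : ℝ) - ((r : ℝ) - 2)) * ((n : ℝ) - t - 1) / 2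
        + ((r : ℝ) - 2) * ((r : ℝ) - 3) / 2
      ≤ (G.edgeSet.ncard : ℝ) := by
  have hrt : (r : ℝ) - 2 ≤ t := by rw [sub_le_iff_le_add]; norm_cast; omega
  subst hn
  linarith [stmt_2_general (by omega) (by omega) hsat hmin hexact]
end

section
/- For every r ≥ 3 there exist a constant C and an integer n₀ (both depending only on r) such that for all n ≥ n₀ there exists an n-vertex rainbow K_{r+1}-saturated graph with at most (r⁴/8)n + C edges. -/
open SimpleGraph

/-!
Fix a partition of the vertices into `r` parts, one of them huge, the others of bounded size, and
let `G` be maximal among the graphs that contain the complete `r`-partite graph on these parts and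
still have a proper coloring without rainbow `K_{r+1}`. Such a `G` is saturated. In any proper
coloring of such a graph, an edge inside the huge part extends greedily to a rainbow `K_{r+1}`, one
vertex from each small part in order of increasing size: for a rainbow clique on `s` vertices, each
of its vertices `y` excludes at most `(s - 1).choose 2` candidates, those joined to `y` in the color
of an edge of the clique that avoids `y`. Hence every edge of `G` meets a small part.
-/

open Finset

section Coloring

variable {V W : Type} {G : SimpleGraph V} {H : SimpleGraph W} {c : Sym2 V → ℕ}

theorem exists_isProperEdgeColoring [Countable V] (G : SimpleGraph V) :
    ∃ c : Sym2 V → ℕ, IsProperEdgeColoring G c :=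
  have ⟨c, hc⟩ := exists_injective_nat (Sym2 V)
  ⟨c, fun _ _ _ _ hne _ ↦ hc.ne hne⟩

theorem HasRainbowCopy.isContained (h : HasRainbowCopy G H c) : H.IsContained G :=
  have ⟨f, hinj, hadj, _⟩ := h
  ⟨⟨⟨f, hadj _ _⟩, hinj⟩⟩

theorem not_hasRainbowCopy_top_of_colorable {k m : ℕ} (hG : G.Colorable k) (hkm : k < m) :
    ¬HasRainbowCopy G (⊤ : SimpleGraph (Fin m)) c :=
  fun h ↦ h.isContained.not_cliqueFree (hG.cliqueFree hkm)

theorem exists_isRainbowSat_ge [Finite V] {G₀ : SimpleGraph V}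
    (hG₀ : ∃ c, IsProperEdgeColoring G₀ c ∧ ¬HasRainbowCopy G₀ H c) :
    ∃ G, G₀ ≤ G ∧ IsRainbowSat G H := by
  obtain ⟨G, hle, hmax⟩ := Finite.exists_le_maximal
    (p := fun G : SimpleGraph V ↦ ∃ c, IsProperEdgeColoring G c ∧ ¬HasRainbowCopy G H c) hG₀
  refine ⟨G, hle, hmax.prop, fun u v hne hnadj c hc ↦ ?_⟩
  by_contra hfree
  exact hmax.not_prop_of_gt (G.lt_sup_edge u v hne hnadj) ⟨c, hc, hfree⟩

theorem IsProperEdgeColoring.injOn_neighborSet (hc : IsProperEdgeColoring G c) (v : V) :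
    Set.InjOn (fun x ↦ c s(v, x)) (G.neighborSet v) := by
  intro x hx y hy hxy
  by_contra hne
  exact hc s(v, x) hx s(v, y) hy (Sym2.congr_right.not.2 hne) ⟨v, by simp, by simp⟩ hxy

theorem IsProperEdgeColoring.exists_forall_color_notMem
    (hc : IsProperEdgeColoring G c) {S T : Finset V} (hST : ∀ y ∈ S, ∀ x ∈ T, G.Adj y x)
    (K : V → Finset ℕ) {m : ℕ} (hK : ∀ y ∈ S, #(K y) ≤ m) (hT : #S * m < #T) :
    ∃ x ∈ T, ∀ y ∈ S, c s(y, x) ∉ K y := by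
  classical
  let excluded (y : V) : Finset V := {x ∈ T | c s(y, x) ∈ K y}
  have card_excluded_le (y : V) (hy : y ∈ S) : #(excluded y) ≤ m := by
    refine (card_le_card_of_injOn (fun x ↦ c s(y, x)) (fun x hx ↦ (mem_filter.1 hx).2) ?_).trans
      (hK y hy)
    exact (hc.injOn_neighborSet y).mono fun x hx ↦ hST y hy x (mem_filter.1 hx).1
  obtain ⟨x, hxT, hx⟩ := exists_mem_notMem_of_card_lt_card
    ((card_biUnion_le_card_mul S excluded m card_excluded_le).trans_lt hT)
  simp only [excluded, mem_biUnion, mem_filter, not_exists, not_and] at hx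
  exact ⟨x, hxT, fun y hy ↦ hx y hy hxT⟩

end Coloring

section RainbowClique

variable {V : Type} [DecidableEq V] {G : SimpleGraph V} {c : Sym2 V → ℕ} {S : Finset V}

/-- The unordered pairs of distinct elements of `S`, that is, the edges of the complete graph
on `S`. -/
def pairs (S : Finset V) : Finset (Sym2 V) :=
  S.offDiag.image Sym2.mk.uncurry

theorem mk_mem_pairs {a b : V} : s(a, b) ∈ pairs S ↔ a ∈ S ∧ b ∈ S ∧ a ≠ b := by
  simp only [pairs, mem_image, mem_offDiag, Prod.exists, Function.uncurry_apply_pair, Sym2.eq_iff]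
  grind

theorem card_pairs (S : Finset V) : #(pairs S) = (#S).choose 2 :=
  Sym2.card_image_offDiag S

theorem coe_pairs_insert {x : V} (hx : x ∉ S) :
    (pairs (insert x S) : Set (Sym2 V)) = ↑(pairs S) ∪ (fun y ↦ s(x, y)) '' S := by
  ext e
  induction e with | _ a b
  simp only [mem_coe, mk_mem_pairs, mem_insert, Set.mem_union, Set.mem_image, Sym2.eq_iff]
  grind

/-- A clique `S` of `G` whose edges have pairwise distinct colors under `c`: the vertex set of a
rainbow complete subgraph. -/
structure IsRainbowClique (G : SimpleGraph V) (c : Sym2 V → ℕ) (S : Finset V) : Prop where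
  isClique : G.IsClique S
  injOn : Set.InjOn c (pairs S)

namespace IsRainbowClique

theorem mem_edgeSet (h : IsRainbowClique G c S) {e : Sym2 V} (he : e ∈ pairs S) :
    e ∈ G.edgeSet := by
  induction e with | _ a b
  obtain ⟨ha, hb, hab⟩ := mk_mem_pairs.1 he
  exact h.isClique ha hb hab

theorem pair {u v : V} (huv : G.Adj u v) : IsRainbowClique G c {u, v} where
  isClique := by simpa using fun _ ↦ huv
  injOn := by
    refine Set.Subsingleton.injOn (card_le_one_iff_subsingleton.1 ?_) c
    rw [card_pairs, card_pair huv.ne, Nat.choose_self]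

theorem hasRainbowCopy (h : IsRainbowClique G c S) {m : ℕ} (hS : #S = m) :
    HasRainbowCopy G (⊤ : SimpleGraph (Fin m)) c := by
  let f (i : Fin m) : V := (S.equivFinOfCardEq hS).symm i
  have hf : Function.Injective f := Subtype.val_injective.comp (Equiv.injective _)
  have hfS (i : Fin m) : f i ∈ S := Subtype.prop _
  have map_mem_pairs (e : Sym2 (Fin m)) (he : e ∈ (⊤ : SimpleGraph (Fin m)).edgeSet) :
      e.map f ∈ pairs S := by
    induction e with | _ i j
    exact mk_mem_pairs.2 ⟨hfS i, hfS j, hf.ne he⟩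
  exact ⟨f, hf, fun i j hij ↦ h.isClique (hfS i) (hfS j) (hf.ne hij),
    fun e₁ h₁ e₂ h₂ hne ↦
      h.injOn.ne (map_mem_pairs e₁ h₁) (map_mem_pairs e₂ h₂) ((Sym2.map.injective hf).ne hne)⟩

protected theorem insert (hc : IsProperEdgeColoring G c) (h : IsRainbowClique G c S) {x : V}
    (hadj : ∀ y ∈ S, G.Adj y x) (hcol : ∀ y ∈ S, c s(y, x) ∉ (pairs (S.erase y)).image c) :
    IsRainbowClique G c (insert x S) where
  isClique := by
    rw [coe_insert, isClique_insert]
    exact ⟨h.isClique, fun y hy _ ↦ (hadj y hy).symm⟩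
  injOn := by
    have hxS : x ∉ S := fun hx ↦ (hadj x hx).ne rfl
    have not_mem_pairs (y : V) : s(x, y) ∉ pairs S := fun hxy ↦ hxS (mk_mem_pairs.1 hxy).1
    have injOn_star : Set.InjOn c ((fun y ↦ s(x, y)) '' S) :=
      ((hc.injOn_neighborSet x).mono fun y hy ↦ (hadj y hy).symm).image_of_comp
    have color_ne (e : Sym2 V) (he : e ∈ pairs S) (y : V) (hy : y ∈ S) : c e ≠ c s(x, y) := by
      by_cases hye : y ∈ e
      · exact hc e (h.mem_edgeSet he) s(x, y) (hadj y hy).symm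
          (ne_of_mem_of_not_mem he (not_mem_pairs y)) ⟨y, hye, Sym2.mem_mk_right x y⟩
      · have he' : e ∈ pairs (S.erase y) := by
          induction e with | _ a b
          grind [mk_mem_pairs]
        rw [Sym2.eq_swap]
        exact ne_of_mem_of_not_mem (mem_image_of_mem c he') (hcol y hy)
    rw [coe_pairs_insert hxS, Set.injOn_union (by simp [Set.disjoint_right, not_mem_pairs])]
    exact ⟨h.injOn, injOn_star, by simpa using color_ne⟩

theorem exists_insert (hc : IsProperEdgeColoring G c) (h : IsRainbowClique G c S) {T : Finset V}
    (hST : ∀ y ∈ S, ∀ x ∈ T, G.Adj y x) (hT : #S * (#S - 1).choose 2 < #T) :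
    ∃ x ∈ T, IsRainbowClique G c (insert x S) := by
  obtain ⟨x, hxT, hcol⟩ := hc.exists_forall_color_notMem hST
    (fun y ↦ (pairs (S.erase y)).image c)
    (fun y hy ↦ card_image_le.trans (by rw [card_pairs, card_erase_of_mem hy])) hT
  exact ⟨x, hxT, h.insert hc (fun y hy ↦ hST y hy x hxT) hcol⟩

end IsRainbowClique

end RainbowClique

/-- The complete multipartite graph on `V` whose parts are the fibers of `p`. -/
abbrev multipartiteGraph {V ι : Type*} (p : V → ι) : SimpleGraph V :=
  (⊤ : SimpleGraph ι).comap p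

theorem colorable_multipartiteGraph {V ι : Type*} [Fintype ι] (p : V → ι) :
    (multipartiteGraph p).Colorable (Fintype.card ι) :=
  Coloring.colorable (.mk p id)

/-- The size of the `k`-th small part of the construction: just enough vertices for one of them to
extend every rainbow clique on `k + 2` vertices outside the part. -/
def partSize (k : ℕ) : ℕ := (k + 2) * (k + 1).choose 2 + 1

theorem eight_mul_sum_partSize_le (R : ℕ) : 8 * ∑ k : Fin R, partSize k ≤ (R + 1) ^ 4 := by
  induction R with
  | zero => simp
  | succ R ih =>
    have choose_mul_two : (R + 1).choose 2 * 2 = (R + 1) * R := by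
      simpa using (Nat.add_one_mul_choose_eq R 1).symm
    simp only [Fin.sum_univ_castSucc, Fin.val_castSucc, Fin.val_last, partSize] at ih ⊢
    nlinarith

section Construction

variable {V : Type} [Fintype V]

theorem exists_card_fiber_some_eq {ι : Type*} [Fintype ι] [DecidableEq ι] (size : ι → ℕ)
    (h : ∑ i, size i ≤ Fintype.card V) :
    ∃ p : V → Option ι, ∀ i, #{v | p v = some i} = size i := by
  obtain ⟨e⟩ : Nonempty ((Σ i, Fin (size i)) ↪ V) :=
    Function.Embedding.nonempty_of_card_le (by simpa using h)
  let p : V → Option ι := Function.extend e (fun x ↦ some x.1) fun _ ↦ none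
  have p_eq_some (v : V) (i : ι) : p v = some i ↔ ∃ x, e ⟨i, x⟩ = v := by
    by_cases hv : ∃ x, e x = v
    · obtain ⟨⟨j, x⟩, rfl⟩ := hv
      simp only [p, e.injective.extend_apply, Option.some_inj, e.injective.eq_iff]
      exact ⟨by rintro rfl; exact ⟨x, rfl⟩, fun ⟨_, h⟩ ↦ (congrArg Sigma.fst h).symm⟩
    · simp only [p, Function.extend_apply' _ _ _ hv, reduceCtorEq, false_iff]
      exact fun ⟨x, hx⟩ ↦ hv ⟨_, hx⟩
  refine ⟨p, fun i ↦ ?_⟩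
  have fiber_eq : ({v | p v = some i} : Finset V) =
      univ.map ((Function.Embedding.sigmaMk i).trans e) := by
    ext v
    simp [p_eq_some]
  rw [fiber_eq, card_map, card_univ, Fintype.card_fin]

theorem card_filter_ne_none {ι : Type*} [Fintype ι] [DecidableEq ι] (p : V → Option ι) :
    #{v | p v ≠ none} = ∑ i, #{v | p v = some i} := by
  simp_rw [card_filter]
  rw [sum_comm]
  refine sum_congr rfl fun v _ ↦ ?_
  cases p v <;> simp

theorem ncard_edgeSet_le_of_isVertexCover {G : SimpleGraph V} {S : Finset V}
    (hS : G.IsVertexCover S) : G.edgeSet.ncard ≤ #S * Fintype.card V := by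
  classical
  have edgeSet_subset : G.edgeSet ⊆ (image₂ (fun a b ↦ s(a, b)) S univ : Finset (Sym2 V)) := by
    intro e he
    induction e with | _ a b
    rcases hS he with ha | hb
    · exact mem_image₂_of_mem ha (mem_univ b)
    · exact Sym2.eq_swap ▸ mem_image₂_of_mem hb (mem_univ a)
  calc G.edgeSet.ncard
    _ ≤ #(image₂ (fun a b ↦ s(a, b)) S univ) := by
      rw [← Set.ncard_coe_finset]
      exact Set.ncard_le_ncard edgeSet_subset
    _ ≤ #S * Fintype.card V := card_image₂_le _ _ _

variable {R : ℕ} {p : V → Option (Fin R)}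

theorem exists_isRainbowClique_card_eq [DecidableEq V] {G : SimpleGraph V} {c : Sym2 V → ℕ}
    (hp : ∀ k : Fin R, partSize k ≤ #{v | p v = some k}) (hG : multipartiteGraph p ≤ G)
    (hc : IsProperEdgeColoring G c) {u v : V} (huv : G.Adj u v) (hu : p u = none)
    (hv : p v = none) {k : ℕ} (hk : k ≤ R) :
    ∃ S, IsRainbowClique G c S ∧ #S = k + 2 ∧ ∀ x ∈ S, ∀ j, p x = some j → j < k := by
  induction k with
  | zero => exact ⟨{u, v}, .pair huv, card_pair huv.ne, by simp [hu, hv]⟩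
  | succ k ih =>
    obtain ⟨S, hS, hcard, hparts⟩ := ih (by lia)
    let T : Finset V := {v | p v = some ⟨k, hk⟩}
    have hST : ∀ y ∈ S, ∀ x ∈ T, G.Adj y x := fun y hy x hx ↦ hG fun hyx ↦
      (hparts y hy ⟨k, hk⟩ (hyx.trans (mem_filter_univ x |>.1 hx))).false
    have hT : #S * (#S - 1).choose 2 < #T := by
      simpa [hcard, partSize, Nat.add_one_le_iff] using hp ⟨k, hk⟩
    obtain ⟨x, hxT, hxS⟩ := hS.exists_insert hc hST hT
    have hx : x ∉ S := fun hx ↦ (hST x hx x hxT).ne rfl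
    refine ⟨insert x S, hxS, by rw [card_insert_of_notMem hx, hcard], ?_⟩
    grind

theorem isVertexCover_of_not_hasRainbowCopy {G : SimpleGraph V} {c : Sym2 V → ℕ}
    (hp : ∀ k : Fin R, partSize k ≤ #{v | p v = some k}) (hG : multipartiteGraph p ≤ G)
    (hc : IsProperEdgeColoring G c)
    (hfree : ¬HasRainbowCopy G (⊤ : SimpleGraph (Fin (R + 2))) c) :
    G.IsVertexCover {v | p v ≠ none} := by
  classical
  intro u v huv
  by_contra! h
  simp only [Set.mem_ofPred_eq, not_not] at h
  obtain ⟨S, hS, hcard, -⟩ := exists_isRainbowClique_card_eq hp hG hc huv h.1 h.2 le_rfl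
  exact hfree (hS.hasRainbowCopy hcard)

end Construction

theorem stmt_5_general (r : ℕ) (hr : 1 ≤ r) (V : Type) [Fintype V]
    (hV : r ^ 4 ≤ 8 * Fintype.card V) :
    ∃ G : SimpleGraph V, IsRainbowSat G (⊤ : SimpleGraph (Fin (r + 1))) ∧
      8 * G.edgeSet.ncard ≤ r ^ 4 * Fintype.card V := by
  obtain ⟨R, rfl⟩ := Nat.exists_eq_add_of_le' hr
  have hsize := eight_mul_sum_partSize_le R
  obtain ⟨p, hp⟩ := exists_card_fiber_some_eq (V := V) (fun k : Fin R ↦ partSize k) (by lia)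
  have hcolorable : (multipartiteGraph p).Colorable (R + 1) := by
    simpa using colorable_multipartiteGraph p
  obtain ⟨c₀, hc₀⟩ := exists_isProperEdgeColoring (multipartiteGraph p)
  obtain ⟨G, hle, hsat⟩ := exists_isRainbowSat_ge
    ⟨c₀, hc₀, not_hasRainbowCopy_top_of_colorable hcolorable (Nat.lt_succ_self _)⟩
  obtain ⟨c, hc, hfree⟩ := hsat.1
  have hcover := isVertexCover_of_not_hasRainbowCopy (fun k ↦ (hp k).ge) hle hc hfree
  have hedges := ncard_edgeSet_le_of_isVertexCover (S := {v | p v ≠ none}) (by simpa using hcover)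
  rw [card_filter_ne_none, sum_congr rfl fun k _ ↦ hp k] at hedges
  exact ⟨G, hsat, by nlinarith⟩

/-- For every `r ≥ 3` there are `C` and `n₀` such that for all `n ≥ n₀`
there is an `n`-vertex rainbow `K_{r+1}`-saturated graph with at most `(r⁴/8)n + C` edges. -/
theorem stmt_5 (r : ℕ) (hr : 3 ≤ r) :
    ∃ C : ℝ, ∃ n₀ : ℕ, ∀ n : ℕ, n₀ ≤ n →
      ∃ G : SimpleGraph (Fin n),
        IsRainbowSat G (⊤ : SimpleGraph (Fin (r + 1))) ∧
        (G.edgeSet.ncard : ℝ) ≤ (r : ℝ) ^ 4 / 8 * (n : ℝ) + C := by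
  refine ⟨0, r ^ 4, fun n hn ↦ ?_⟩
  obtain ⟨G, hsat, hedges⟩ := stmt_5_general r (by lia) (Fin n) (by rw [Fintype.card_fin]; lia)
  refine ⟨G, hsat, ?_⟩
  rw [Fintype.card_fin] at hedges
  have : (8 * G.edgeSet.ncard : ℝ) ≤ r ^ 4 * n := mod_cast hedges
  linarith
end

section
/- If G is a rainbow K_4-saturated graph and x, y are vertices of G with xy not an edge of G, then the common neighborhood N(x) ∩ N(y) contains two adjacent vertices. -/
open SimpleGraph

/-!
Take a coloring of `G` without a rainbow `K_n` and give the new edge `xy` a color used nowhere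
else. The coloring of `G + xy` is proper, so saturation yields a rainbow `K_n`, and this copy must
use `xy` since otherwise it would already be rainbow in `G`. Its remaining `n - 2` vertices form a
clique of common neighbors of `x` and `y` in `G`.
-/

lemma mem_edgeSet_of_mem_sup_fromEdgeSet_singleton {V : Type*} {G : SimpleGraph V} {e e₀ : Sym2 V}
    (he : e ∈ (G ⊔ fromEdgeSet {e₀}).edgeSet) (hne : e ≠ e₀) : e ∈ G.edgeSet := by
  rw [edgeSet_sup, edgeSet_fromEdgeSet] at he
  exact he.resolve_right fun h ↦ hne h.1

section AddEdge

variable {V W : Type} {G : SimpleGraph V} {H : SimpleGraph W} {c : Sym2 V → ℕ} {e₀ : Sym2 V}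

open scoped Classical in
/-- The coloring `c` with `e₀` recolored by a color used nowhere else. The old colors are shifted
up by one so that `0` is free. -/
noncomputable def recolorFresh (c : Sym2 V → ℕ) (e₀ : Sym2 V) : Sym2 V → ℕ :=
  fun e ↦ if e = e₀ then 0 else c e + 1

lemma recolorFresh_of_ne {e : Sym2 V} (he : e ≠ e₀) : recolorFresh c e₀ e = c e + 1 :=
  if_neg he

lemma recolorFresh_ne_recolorFresh {e₁ e₂ : Sym2 V} (hne : e₁ ≠ e₂)
    (hc : e₁ ≠ e₀ → e₂ ≠ e₀ → c e₁ ≠ c e₂) :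
    recolorFresh c e₀ e₁ ≠ recolorFresh c e₀ e₂ := by
  by_cases h₁ : e₁ = e₀ <;> by_cases h₂ : e₂ = e₀ <;> simp_all [recolorFresh]

lemma IsProperEdgeColoring.sup_fromEdgeSet_singleton (hc : IsProperEdgeColoring G c)
    (e₀ : Sym2 V) : IsProperEdgeColoring (G ⊔ fromEdgeSet {e₀}) (recolorFresh c e₀) :=
  fun e₁ h₁ e₂ h₂ hne hv ↦ recolorFresh_ne_recolorFresh hne fun hne₁ hne₂ ↦
    hc e₁ (mem_edgeSet_of_mem_sup_fromEdgeSet_singleton h₁ hne₁)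
      e₂ (mem_edgeSet_of_mem_sup_fromEdgeSet_singleton h₂ hne₂) hne hv

lemma HasRainbowCopy.of_sup_fromEdgeSet_singleton {f : W → V} (hinj : Function.Injective f)
    (hadj : ∀ a b, H.Adj a b → (G ⊔ fromEdgeSet {e₀}).Adj (f a) (f b))
    (hrainbow : ∀ e₁ ∈ H.edgeSet, ∀ e₂ ∈ H.edgeSet, e₁ ≠ e₂ →
      recolorFresh c e₀ (e₁.map f) ≠ recolorFresh c e₀ (e₂.map f))
    (havoid : ∀ e ∈ H.edgeSet, e.map f ≠ e₀) : HasRainbowCopy G H c := by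
  refine ⟨f, hinj, fun a b hab ↦
    mem_edgeSet_of_mem_sup_fromEdgeSet_singleton (hadj a b hab) (havoid s(a, b) hab), ?_⟩
  intro e₁ h₁ e₂ h₂ hne heq
  apply hrainbow e₁ h₁ e₂ h₂ hne
  rw [recolorFresh_of_ne (havoid e₁ h₁), recolorFresh_of_ne (havoid e₂ h₂), heq]

lemma HasRainbowCopy.exists_copy_deleteEdges
    (h : HasRainbowCopy (G ⊔ fromEdgeSet {e₀}) H (recolorFresh c e₀))
    (hfree : ¬ HasRainbowCopy G H c) :
    ∃ e ∈ H.edgeSet, ∃ φ : Copy (H.deleteEdges {e}) G, e.map φ = e₀ := by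
  obtain ⟨f, hinj, hadj, hrainbow⟩ := h
  obtain ⟨e, he, hmap⟩ : ∃ e ∈ H.edgeSet, e.map f = e₀ := by
    by_contra! havoid
    exact hfree (.of_sup_fromEdgeSet_singleton hinj hadj hrainbow havoid)
  have hadj' {a b : W} (hab : (H.deleteEdges {e}).Adj a b) : G.Adj (f a) (f b) := by
    rw [deleteEdges_adj] at hab
    have hne : s(a, b).map f ≠ e₀ := fun h ↦ hab.2 (Sym2.map.injective hinj (h.trans hmap.symm))
    exact mem_edgeSet_of_mem_sup_fromEdgeSet_singleton (hadj a b hab.1) hne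
  exact ⟨e, he, ⟨⟨f, hadj'⟩, hinj⟩, hmap⟩

lemma IsRainbowSat.exists_copy_deleteEdges (hsat : IsRainbowSat G H) {x y : V} (hxy : x ≠ y)
    (hne : ¬ G.Adj x y) :
    ∃ i j, H.Adj i j ∧ ∃ φ : Copy (H.deleteEdges {s(i, j)}) G, φ i = x ∧ φ j = y := by
  obtain ⟨⟨c, hproper, hfree⟩, hadd⟩ := hsat
  obtain ⟨e, he, φ, hmap⟩ :=
    (hadd x y hxy hne _ (hproper.sup_fromEdgeSet_singleton s(x, y))).exists_copy_deleteEdges hfree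
  induction e using Sym2.ind with | _ i j
  rcases Sym2.eq_iff.1 hmap with hends | hends
  · exact ⟨i, j, he, φ, hends⟩
  · refine ⟨j, i, (H.mem_edgeSet.1 he).symm, ?_⟩
    rw [Sym2.eq_swap]
    exact ⟨φ, hends.symm⟩

end AddEdge

lemma exists_isNClique_subset_commonNeighbors_of_copy {V W : Type*} [Fintype W]
    {G : SimpleGraph V} {i j : W} (hij : i ≠ j)
    (φ : Copy ((⊤ : SimpleGraph W).deleteEdges {s(i, j)}) G) :
    ∃ s : Finset V, ↑s ⊆ G.commonNeighbors (φ i) (φ j) ∧ G.IsNClique (Fintype.card W - 2) s := by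
  classical
  have hadj {a b : W} (hab : a ≠ b) (hb : b ∈ ({i, j}ᶜ : Finset W)) : G.Adj (φ a) (φ b) := by
    refine φ.toHom.map_adj (deleteEdges_adj.2 ⟨hab, fun h ↦ ?_⟩)
    have hmem : b ∈ s(i, j) := h ▸ Sym2.mem_mk_right a b
    exact Finset.mem_compl.1 hb (by simpa using hmem)
  refine ⟨({i, j}ᶜ : Finset W).map φ.toEmbedding, ?_, ?_, ?_⟩
  · simp only [Finset.coe_map, Set.image_subset_iff]
    intro k hk
    have hne : k ≠ i ∧ k ≠ j := by simpa using Finset.mem_coe.1 hk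
    exact ⟨hadj hne.1.symm hk, hadj hne.2.symm hk⟩
  · rw [Finset.coe_map]
    rintro _ ⟨k, -, rfl⟩ _ ⟨l, hl, rfl⟩ hkl
    exact hadj (ne_of_apply_ne _ hkl) hl
  · rw [Finset.card_map, Finset.card_compl, Finset.card_pair hij]

theorem stmt_6_general {V : Type} {G : SimpleGraph V} {n : ℕ}
    (hsat : IsRainbowSat G (⊤ : SimpleGraph (Fin (n + 2)))) {x y : V} (hxy : x ≠ y)
    (hne : ¬ G.Adj x y) :
    ∃ s : Finset V, ↑s ⊆ G.commonNeighbors x y ∧ G.IsNClique n s := by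
  obtain ⟨i, j, hij, φ, rfl, rfl⟩ := hsat.exists_copy_deleteEdges hxy hne
  simpa only [Fintype.card_fin, Nat.add_sub_cancel] using
    exists_isNClique_subset_commonNeighbors_of_copy hij.ne φ

/-- In a rainbow `K_4`-saturated graph, the common neighborhood of any
two nonadjacent vertices contains two adjacent vertices. -/
theorem stmt_6 {V : Type} (G : SimpleGraph V)
    (hsat : IsRainbowSat G (⊤ : SimpleGraph (Fin 4)))
    (x y : V) (hxy : x ≠ y) (hne : ¬ G.Adj x y) :
    ∃ a ∈ G.neighborSet x ∩ G.neighborSet y,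
      ∃ b ∈ G.neighborSet x ∩ G.neighborSet y, G.Adj a b := by
  obtain ⟨s, hs, hclique⟩ := stmt_6_general hsat hxy hne
  obtain ⟨a, ha, b, hb, hab⟩ := Finset.one_lt_card.1 (hclique.card_eq ▸ one_lt_two)
  exact ⟨a, hs ha, b, hs hb, hclique.isClique ha hb hab⟩
end

section
/- If G is a rainbow K_4-saturated graph, then the set of vertices of G having degree at most 3 forms a clique (every two such vertices are adjacent). -/
open SimpleGraph

/-!
A copy of `K₄` in a proper edge-coloring fails to be rainbow exactly when one of its three perfect
matchings is monochromatic. Suppose `u` and `v` are distinct vertices of degree at most 3, and let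
`c` color `G` without rainbow `K₄`. Recoloring only the edges at `u` and `v`, with the help of two
fresh colors, makes room for the edge `uv`; hence `uv` cannot be a non-edge of a saturated graph.

Each of `u` and `v` lies, together with two fixed adjacent neighbors `a` and `b`, in at most one
`K₄`. If no two common neighbors of `u` and `v` are adjacent, only `uv` needs a fresh color. If `a`
and `b` are adjacent common neighbors, every `K₄` containing `uv` has a monochromatic matching
either because `uv` gets the color of `ab`, or because two disjoint edges at `u` and `v` share a
fresh color. Which of these is possible depends on the matchings that are monochromatic in the `K₄`s
on `u, a, b` and on `v, a, b`, and on whether there is a third common neighbor.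
-/

local notation "K₄" => (⊤ : SimpleGraph (Fin 4))

theorem eq_of_encard_le_three {α : Type*} {S : Set α} {a b x y : α} (hS : S.encard ≤ 3)
    (ha : a ∈ S) (hb : b ∈ S) (hx : x ∈ S) (hy : y ∈ S) (hab : a ≠ b) (hxa : x ≠ a) (hxb : x ≠ b)
    (hya : y ≠ a) (hyb : y ≠ b) : x = y := by
  by_contra hxy
  have hcard : ({a, b, x, y} : Set α).encard = 4 := by
    rw [Set.encard_insert_of_notMem (by simp [hab, hxa.symm, hya.symm]),
      Set.encard_insert_of_notMem (by simp [hxb.symm, hyb.symm]), Set.encard_pair hxy]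
    norm_num
  have hle : ({a, b, x, y} : Set α).encard ≤ 3 :=
    (Set.encard_le_encard (by grind)).trans hS
  rw [hcard] at hle
  exact absurd hle (by decide)

section Colorings

variable {V W : Type} {G : SimpleGraph V} {c : Sym2 V → ℕ}

/-- A proper edge-coloring of `G` without rainbow copies of `H`: a saturated graph has one, but
loses it when any non-edge is added. -/
structure IsRainbowFreeColoring (G : SimpleGraph V) (H : SimpleGraph W) (c : Sym2 V → ℕ) :
    Prop where
  proper : IsProperEdgeColoring G c
  not_hasRainbowCopy : ¬ HasRainbowCopy G H c

theorem IsRainbowFreeColoring.comp_injective {H : SimpleGraph W} {g : ℕ → ℕ}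
    (hc : IsRainbowFreeColoring G H c) (hg : Function.Injective g) :
    IsRainbowFreeColoring G H (g ∘ c) where
  proper e₁ he₁ e₂ he₂ hne hv := hg.ne (hc.proper e₁ he₁ e₂ he₂ hne hv)
  not_hasRainbowCopy := by
    rintro ⟨f, hf, hadj, hrainbow⟩
    exact hc.not_hasRainbowCopy ⟨f, hf, hadj, fun e₁ he₁ e₂ he₂ hne h =>
      hrainbow e₁ he₁ e₂ he₂ hne (congrArg g h)⟩

theorem isProperEdgeColoring_iff_injOn :
    IsProperEdgeColoring G c ↔ ∀ v, Set.InjOn (fun w => c s(v, w)) (G.neighborSet v) := by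
  constructor
  · intro h v w hw z hz hwz
    by_contra hne
    exact h s(v, w) hw s(v, z) hz (fun h => hne (Sym2.congr_right.mp h)) ⟨v, by simp, by simp⟩ hwz
  · rintro h e₁ he₁ e₂ he₂ hne ⟨v, hv₁, hv₂⟩
    obtain ⟨w, rfl⟩ := hv₁
    obtain ⟨z, rfl⟩ := hv₂
    exact fun hwz => hne (congrArg (s(v, ·)) (h v he₁ he₂ hwz))

/-- In the `K₄` formed by a triangle `x y z` colored by `c` and an apex whose edge to each `w` has
color `p w`, one of the three perfect matchings is monochromatic. For proper colorings this is
the failure of the `K₄` to be rainbow. -/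
def HasMonoMatching (c : Sym2 V → ℕ) (p : V → ℕ) (x y z : V) : Prop :=
  p x = c s(y, z) ∨ p y = c s(x, z) ∨ p z = c s(x, y)

theorem hasMonoMatching_rotate {p : V → ℕ} {x y z : V} :
    HasMonoMatching c p x y z ↔ HasMonoMatching c p y z x := by
  simp only [HasMonoMatching, Sym2.eq_swap (a := x)]
  tauto

theorem hasMonoMatching_swap {p : V → ℕ} {x y z : V} :
    HasMonoMatching c p x y z ↔ HasMonoMatching c p y x z := by
  simp only [HasMonoMatching, Sym2.eq_swap (a := x) (b := y)]
  tauto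

theorem perfectMatching_fin_four : ∀ e₁ e₂ : Sym2 (Fin 4), ¬ e₁.IsDiag → ¬ e₂.IsDiag →
    (¬ ∃ v, v ∈ e₁ ∧ v ∈ e₂) →
    s(e₁, e₂) = s(s(0, 1), s(2, 3)) ∨ s(e₁, e₂) = s(s(0, 2), s(1, 3)) ∨
      s(e₁, e₂) = s(s(0, 3), s(1, 2)) := by
  decide

theorem IsProperEdgeColoring.not_hasRainbowCopy_iff (hc : IsProperEdgeColoring G c) :
    ¬ HasRainbowCopy G K₄ c ↔ ∀ w x y z, G.Adj w x → G.Adj w y → G.Adj w z →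
      G.Adj x y → G.Adj x z → G.Adj y z → HasMonoMatching c (fun a => c s(w, a)) x y z := by
  refine ⟨fun h w x y z wx wy wz xy xz yz => ?_, ?_⟩
  · by_contra hmono
    simp only [HasMonoMatching, not_or] at hmono
    obtain ⟨h₁, h₂, h₃⟩ := hmono
    have hadj : ∀ i j, i ≠ j → G.Adj (![w, x, y, z] i) (![w, x, y, z] j) := by
      intro i j hij
      fin_cases i <;> fin_cases j <;> first | exact absurd rfl hij | simpa [G.adj_comm]
    refine h ⟨![w, x, y, z], fun i j hij => by_contra fun hne => (hadj i j hne).ne hij,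
      fun i j hij => hadj i j hij.ne, fun e₁ he₁ e₂ he₂ hne heq => ?_⟩
    by_cases hv : ∃ i, i ∈ e₁ ∧ i ∈ e₂
    · obtain ⟨i, ⟨j, rfl⟩, ⟨k, rfl⟩⟩ := hv
      have hjk : j ≠ k := fun h => hne (congrArg (s(i, ·)) h)
      exact (hadj j k hjk).ne (isProperEdgeColoring_iff_injOn.mp hc _
        (hadj i j (by simpa using he₁)) (hadj i k (by simpa using he₂)) heq)
    · have hmatch := perfectMatching_fin_four e₁ e₂ (not_isDiag_of_mem_edgeSet _ he₁)
        (not_isDiag_of_mem_edgeSet _ he₂) hv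
      simp only [Sym2.eq_iff] at hmatch
      rcases hmatch with (⟨rfl, rfl⟩ | ⟨rfl, rfl⟩) | (⟨rfl, rfl⟩ | ⟨rfl, rfl⟩) |
        (⟨rfl, rfl⟩ | ⟨rfl, rfl⟩)
      · exact h₁ heq
      · exact h₁ heq.symm
      · exact h₂ heq
      · exact h₂ heq.symm
      · exact h₃ heq
      · exact h₃ heq.symm
  · rintro h ⟨f, -, hadj, hrainbow⟩
    rcases h (f 0) (f 1) (f 2) (f 3) (hadj _ _ (by decide)) (hadj _ _ (by decide))
      (hadj _ _ (by decide)) (hadj _ _ (by decide)) (hadj _ _ (by decide))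
      (hadj _ _ (by decide)) with heq | heq | heq
    · exact hrainbow s(0, 1) (by decide) s(2, 3) (by decide) (by decide) heq
    · exact hrainbow s(0, 2) (by decide) s(1, 3) (by decide) (by decide) heq
    · exact hrainbow s(0, 3) (by decide) s(1, 2) (by decide) (by decide) heq

/-- The edge-coloring obtained from `c` by giving each edge `vw` at `v` the color `q w`. It is used
to change the colors at a single vertex. -/
noncomputable def recolorStar (c : Sym2 V → ℕ) (v : V) (q : V → ℕ) : Sym2 V → ℕ :=
  open Classical in
  Sym2.lift ⟨fun x y => if x = v then q y else if y = v then q x else c s(x, y), by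
    intro x y; grind [Sym2.eq_swap]⟩

theorem recolorStar_left (c : Sym2 V → ℕ) (v : V) (q : V → ℕ) (w : V) :
    recolorStar c v q s(v, w) = q w := by
  simp [recolorStar]

theorem recolorStar_right (c : Sym2 V → ℕ) (v : V) (q : V → ℕ) (w : V) :
    recolorStar c v q s(w, v) = q w := by
  rw [Sym2.eq_swap, recolorStar_left]

theorem recolorStar_of_ne {v x y : V} (c : Sym2 V → ℕ) (q : V → ℕ) (hx : x ≠ v) (hy : y ≠ v) :
    recolorStar c v q s(x, y) = c s(x, y) := by
  simp [recolorStar, hx, hy]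

theorem hasMonoMatching_recolorStar_left {u y z : V} {p q : V → ℕ} (hy : y ≠ u) (hz : z ≠ u) :
    HasMonoMatching (recolorStar c u p) q u y z ↔ q u = c s(y, z) ∨ q y = p z ∨ q z = p y := by
  rw [HasMonoMatching, recolorStar_left, recolorStar_left, recolorStar_of_ne c p hy hz]

theorem hasMonoMatching_recolorStar_of_ne {u x y z : V} {p q : V → ℕ} (hx : x ≠ u) (hy : y ≠ u)
    (hz : z ≠ u) :
    HasMonoMatching (recolorStar c u p) q x y z ↔ HasMonoMatching c q x y z := by
  simp only [HasMonoMatching, recolorStar_of_ne c p, hx, hy, hz, ne_eq, not_false_eq_true]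

/-- Coloring the edge from `v` to each neighbor `w` with `p w` fits the coloring `c` of the edges
of `G` that avoid `v`: it causes neither a conflict at a vertex nor a rainbow `K₄` through `v`. -/
structure IsStarColoring (G : SimpleGraph V) (c : Sym2 V → ℕ) (v : V) (p : V → ℕ) : Prop where
  injOn : Set.InjOn p (G.neighborSet v)
  ne : ∀ w z, G.Adj v w → G.Adj w z → z ≠ v → p w ≠ c s(w, z)
  mono : ∀ x y z, G.Adj v x → G.Adj v y → G.Adj v z → G.Adj x y → G.Adj x z → G.Adj y z →
    HasMonoMatching c p x y z

theorem IsRainbowFreeColoring.isStarColoring (hc : IsRainbowFreeColoring G K₄ c) (v : V) :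
    IsStarColoring G c v (fun w => c s(v, w)) where
  injOn := isProperEdgeColoring_iff_injOn.mp hc.proper v
  ne w z hvw hwz hzv heq := hzv <| .symm <|
    isProperEdgeColoring_iff_injOn.mp hc.proper w hvw.symm hwz (by simpa [Sym2.eq_swap] using heq)
  mono := hc.proper.not_hasRainbowCopy_iff.mp hc.not_hasRainbowCopy v

theorem IsStarColoring.isProperEdgeColoring_recolorStar {G' : SimpleGraph V} {v : V} {q : V → ℕ}
    (hq : IsStarColoring G' c v q) (hc : IsProperEdgeColoring G c)
    (hG : ∀ x y, x ≠ v → y ≠ v → G'.Adj x y → G.Adj x y) :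
    IsProperEdgeColoring G' (recolorStar c v q) := by
  refine isProperEdgeColoring_iff_injOn.mpr fun x y hy z hz heq => ?_
  beta_reduce at heq
  by_cases hx : x = v
  · subst hx
    exact hq.injOn hy hz (by simpa only [recolorStar_left] using heq)
  by_cases hyv : y = v <;> by_cases hzv : z = v
  · exact hyv.trans hzv.symm
  · subst hyv
    rw [recolorStar_right, recolorStar_of_ne c q hx hzv] at heq
    exact absurd heq (hq.ne x z hy.symm hz hzv)
  · subst hzv
    rw [recolorStar_right, recolorStar_of_ne c q hx hyv] at heq
    exact absurd heq.symm (hq.ne x y hz.symm hy hyv)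
  · rw [recolorStar_of_ne c q hx hyv, recolorStar_of_ne c q hx hzv] at heq
    exact isProperEdgeColoring_iff_injOn.mp hc x (hG x y hx hyv hy) (hG x z hx hzv hz) heq

theorem IsStarColoring.isRainbowFreeColoring_recolorStar {G' : SimpleGraph V} {v : V} {q : V → ℕ}
    (hq : IsStarColoring G' c v q) (hc : IsRainbowFreeColoring G K₄ c)
    (hG : ∀ x y, x ≠ v → y ≠ v → G'.Adj x y → G.Adj x y) :
    IsRainbowFreeColoring G' K₄ (recolorStar c v q) := by
  have hproper := hq.isProperEdgeColoring_recolorStar hc.proper hG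
  refine ⟨hproper, hproper.not_hasRainbowCopy_iff.mpr fun w x y z wx wy wz xy xz yz => ?_⟩
  by_cases hw : w = v
  · subst hw
    simpa only [recolorStar_left, hasMonoMatching_recolorStar_of_ne wx.ne' wy.ne' wz.ne'] using
      hq.mono x y z wx wy wz xy xz yz
  have hapex : ∀ {a b}, G'.Adj w v → G'.Adj w a → G'.Adj w b → G'.Adj v a → G'.Adj v b →
      G'.Adj a b → HasMonoMatching (recolorStar c v q)
        (fun i => recolorStar c v q s(w, i)) v a b := by
    intro a b wv wa wb va vb ab
    have hmono := hq.mono w a b wv.symm va vb wa wb ab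
    rw [hasMonoMatching_recolorStar_left va.ne' vb.ne', recolorStar_right,
      recolorStar_of_ne c q hw va.ne', recolorStar_of_ne c q hw vb.ne']
    rw [HasMonoMatching] at hmono
    omega
  by_cases hx : x = v
  · subst hx
    exact hapex wx wy wz xy xz yz
  by_cases hy : y = v
  · subst hy
    exact hasMonoMatching_rotate.mpr (hapex wy wz wx yz xy.symm xz.symm)
  by_cases hz : z = v
  · subst hz
    exact hasMonoMatching_rotate.mp (hapex wz wx wy xz.symm yz.symm xy)
  rw [hasMonoMatching_recolorStar_of_ne hx hy hz]
  simpa only [HasMonoMatching, recolorStar_of_ne c q hw, hx, hy, hz, ne_eq, not_false_eq_true] using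
    (hc.isStarColoring w).mono x y z (hG w x hw hx wx) (hG w y hw hy wy) (hG w z hw hz wz)
      (hG x y hx hy xy) (hG x z hx hz xz) (hG y z hy hz yz)

variable {u v a b : V}

theorem adj_of_sup_edge_adj {w z : V} (h : (G ⊔ edge u v).Adj w z) (hu : z ≠ u) (hv : z ≠ v) :
    G.Adj w z := by
  simpa [edge_adj, hu, hv] using h

theorem injOn_update_neighborSet_sup_edge [DecidableEq V] {q : V → ℕ} {k : ℕ}
    (hq : Set.InjOn q (G.neighborSet v)) (hqk : ∀ w, G.Adj v w → q w ≠ k) :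
    Set.InjOn (Function.update q u k) ((G ⊔ edge u v).neighborSet v) := by
  intro w hw z hz heq
  rw [mem_neighborSet] at hw hz
  by_cases hwu : w = u <;> by_cases hzu : z = u
  · exact hwu.trans hzu.symm
  · subst hwu
    rw [Function.update_self, Function.update_of_ne hzu] at heq
    exact absurd heq.symm (hqk z (adj_of_sup_edge_adj hz hzu hz.ne'))
  · subst hzu
    rw [Function.update_self, Function.update_of_ne hwu] at heq
    exact absurd heq (hqk w (adj_of_sup_edge_adj hw hwu hw.ne'))
  · rw [Function.update_of_ne hwu, Function.update_of_ne hzu] at heq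
    exact hq (adj_of_sup_edge_adj hw hwu hw.ne') (adj_of_sup_edge_adj hz hzu hz.ne') heq

theorem IsStarColoring.mono_update_sup_edge [DecidableEq V] {p q : V → ℕ} {k : ℕ}
    (hq : IsStarColoring G c v q)
    (hmono : ∀ w z, G.Adj u w → G.Adj v w → G.Adj u z → G.Adj v z → G.Adj w z →
      k = c s(w, z) ∨ p w = q z ∨ p z = q w) {x y z : V} (vx : (G ⊔ edge u v).Adj v x)
    (vy : (G ⊔ edge u v).Adj v y) (vz : (G ⊔ edge u v).Adj v z) (xy : (G ⊔ edge u v).Adj x y)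
    (xz : (G ⊔ edge u v).Adj x z) (yz : (G ⊔ edge u v).Adj y z) :
    HasMonoMatching (recolorStar c u p) (Function.update q u k) x y z := by
  have hadj {a b : V} (hb : (G ⊔ edge u v).Adj v b) (hbu : b ≠ u)
      (hab : (G ⊔ edge u v).Adj a b) : G.Adj a b := adj_of_sup_edge_adj hab hbu hb.ne'
  have hapex : ∀ {a b}, (G ⊔ edge u v).Adj v a → (G ⊔ edge u v).Adj v b →
      (G ⊔ edge u v).Adj u a → (G ⊔ edge u v).Adj u b → (G ⊔ edge u v).Adj a b →
      HasMonoMatching (recolorStar c u p) (Function.update q u k) u a b := by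
    intro a b va vb ua ub ab
    rw [hasMonoMatching_recolorStar_left ua.ne' ub.ne', Function.update_self,
      Function.update_of_ne ua.ne', Function.update_of_ne ub.ne']
    have := hmono a b (hadj va ua.ne' ua) (hadj va ua.ne' va) (hadj vb ub.ne' ub)
      (hadj vb ub.ne' vb) (hadj vb ub.ne' ab)
    omega
  by_cases hx : x = u
  · subst hx
    exact hapex vy vz xy xz yz
  by_cases hy : y = u
  · subst hy
    exact hasMonoMatching_rotate.mpr (hapex vz vx yz xy.symm xz.symm)
  by_cases hz : z = u
  · subst hz
    exact hasMonoMatching_rotate.mp (hapex vx vy xz.symm yz.symm xy)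
  rw [hasMonoMatching_recolorStar_of_ne hx hy hz]
  simpa only [HasMonoMatching, Function.update_of_ne, hx, hy, hz, ne_eq, not_false_eq_true] using
    hq.mono x y z (hadj vx hx vx) (hadj vy hy vy) (hadj vz hz vz) (hadj vy hy xy)
      (hadj vz hz xz) (hadj vz hz yz)

theorem IsStarColoring.update_sup_edge [DecidableEq V] {p q : V → ℕ} {k : ℕ}
    (hq : IsStarColoring G c v q) (hpk : ∀ w, G.Adj u w → p w ≠ k)
    (hqk : ∀ w, G.Adj v w → q w ≠ k) (hpq : ∀ w, G.Adj u w → G.Adj v w → p w ≠ q w)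
    (hmono : ∀ w z, G.Adj u w → G.Adj v w → G.Adj u z → G.Adj v z → G.Adj w z →
      k = c s(w, z) ∨ p w = q z ∨ p z = q w) :
    IsStarColoring (G ⊔ edge u v) (recolorStar c u p) v (Function.update q u k) where
  injOn := injOn_update_neighborSet_sup_edge hq.injOn hqk
  ne w z hvw hwz hzv := by
    by_cases hw : w = u
    · subst hw
      rw [Function.update_self, recolorStar_left]
      exact (hpk z (adj_of_sup_edge_adj hwz hwz.ne' hzv)).symm
    have hvw' := adj_of_sup_edge_adj hvw hw hvw.ne'
    rw [Function.update_of_ne hw]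
    by_cases hz : z = u
    · subst hz
      rw [recolorStar_right]
      exact (hpq w (adj_of_sup_edge_adj hwz.symm hw hvw.ne') hvw').symm
    · rw [recolorStar_of_ne c p hw hz]
      exact hq.ne w z hvw' (adj_of_sup_edge_adj hwz hz hzv) hzv
  mono _ _ _ := hq.mono_update_sup_edge hmono

theorem IsRainbowFreeColoring.exists_sup_edge {p q : V → ℕ} {k : ℕ}
    (hc : IsRainbowFreeColoring G K₄ c) (hp : IsStarColoring G c u p) (hq : IsStarColoring G c v q)
    (hpk : ∀ w, G.Adj u w → p w ≠ k) (hqk : ∀ w, G.Adj v w → q w ≠ k)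
    (hpq : ∀ w, G.Adj u w → G.Adj v w → p w ≠ q w)
    (hmono : ∀ w z, G.Adj u w → G.Adj v w → G.Adj u z → G.Adj v z → G.Adj w z →
      k = c s(w, z) ∨ p w = q z ∨ p z = q w) :
    ∃ d, IsRainbowFreeColoring (G ⊔ edge u v) K₄ d := by
  classical
  exact ⟨_, (hq.update_sup_edge hpk hqk hpq hmono).isRainbowFreeColoring_recolorStar
    (hp.isRainbowFreeColoring_recolorStar hc fun _ _ _ _ h => h) fun x y hx hy h =>
      by simpa [edge_adj, hx, hy] using h⟩

theorem hasMonoMatching_of_encard_le_three {p : V → ℕ}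
    (hN : (G.neighborSet v).encard ≤ 3) (va : G.Adj v a) (vb : G.Adj v b) (hab : a ≠ b)
    (h : ∀ z, G.Adj v z → G.Adj a z → G.Adj b z → HasMonoMatching c p a b z) {x y z : V}
    (vx : G.Adj v x) (vy : G.Adj v y) (vz : G.Adj v z) (xy : G.Adj x y) (xz : G.Adj x z)
    (yz : G.Adj y z) : HasMonoMatching c p x y z := by
  have hmem : ∀ {w}, G.Adj v w → w = x ∨ w = y ∨ w = z := by
    intro w vw
    by_contra! hw
    exact hw.2.2 (eq_of_encard_le_three hN vx vy vw vz xy.ne hw.1 hw.2.1 xz.ne' yz.ne')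
  rcases hmem va with rfl | rfl | rfl <;> rcases hmem vb with rfl | rfl | rfl
  all_goals first | exact absurd rfl hab | skip
  · exact h _ vz xz yz
  · exact hasMonoMatching_rotate.mp (hasMonoMatching_swap.mp (h _ vy xy yz.symm))
  · exact hasMonoMatching_swap.mp (h _ vz yz xz)
  · exact hasMonoMatching_rotate.mpr (h _ vx xy.symm xz.symm)
  · exact hasMonoMatching_rotate.mp (h _ vy yz.symm xy)
  · exact hasMonoMatching_rotate.mpr (hasMonoMatching_swap.mp (h _ vx xz.symm xy.symm))

theorem IsRainbowFreeColoring.isStarColoring_of_lt_or_eq {n : ℕ} {p : V → ℕ}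
    (hc : IsRainbowFreeColoring G K₄ c) (hn : ∀ e, n ≤ c e)
    (hp : ∀ w, G.Adj v w → p w < n ∨ p w = c s(v, w))
    (hinj : ∀ w z, G.Adj v w → G.Adj v z → p w = p z → p w < n → w = z)
    (hmono : ∀ x y z, G.Adj v x → G.Adj v y → G.Adj v z → G.Adj x y → G.Adj x z → G.Adj y z →
      HasMonoMatching c p x y z) : IsStarColoring G c v p where
  injOn w vw z vz heq := by
    rcases hp w vw with hw | hw
    · exact hinj w z vw vz heq hw
    rcases hp z vz with hz | hz
    · exact (hinj z w vz vw heq.symm hz).symm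
    · exact (hc.isStarColoring v).injOn vw vz (hw.symm.trans (heq.trans hz))
  ne w z vw wz hzv := by
    rcases hp w vw with hw | hw
    · exact (hw.trans_le (hn _)).ne
    · exact hw ▸ (hc.isStarColoring v).ne w z vw wz hzv
  mono := hmono

open Classical in
theorem IsRainbowFreeColoring.isStarColoring_keep_one {n i j : ℕ}
    (hc : IsRainbowFreeColoring G K₄ c) (hn : ∀ e, n ≤ c e) (hi : i < n) (hj : j < n) (hij : i ≠ j)
    (hN : (G.neighborSet v).encard ≤ 3) (va : G.Adj v a) (vb : G.Adj v b) (hab : a ≠ b)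
    (h : ∀ z, G.Adj v z → G.Adj a z → G.Adj b z → c s(v, a) = c s(b, z)) :
    IsStarColoring G c v (fun w => if w = a then c s(v, a) else if w = b then i else j) := by
  have hva := hn s(v, a)
  refine hc.isStarColoring_of_lt_or_eq hn (by grind) (fun w z vw vz heq hlt => ?_) ?_
  · have hunique := eq_of_encard_le_three hN va vb vw vz hab
    grind
  · intro x y z
    exact hasMonoMatching_of_encard_le_three hN va vb hab fun z vz az bz =>
      .inl (by simpa using h z vz az bz)

open Classical in
theorem IsRainbowFreeColoring.isStarColoring_keep_two {n : ℕ}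
    (hc : IsRainbowFreeColoring G K₄ c) (hn : ∀ e, n < c e)
    (hN : (G.neighborSet v).encard ≤ 3) (va : G.Adj v a) (vb : G.Adj v b) (hab : a ≠ b)
    (h : ∀ z, G.Adj v z → G.Adj a z → G.Adj b z →
      c s(v, a) = c s(b, z) ∨ c s(v, b) = c s(a, z)) :
    IsStarColoring G c v (fun w => if w = a ∨ w = b then c s(v, w) else n) := by
  refine hc.isStarColoring_of_lt_or_eq hn (by grind) (fun w z vw vz heq hlt => ?_) ?_
  · have hvw := hn s(v, w)
    have hvz := hn s(v, z)
    have hunique := eq_of_encard_le_three hN va vb vw vz hab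
    grind
  · intro x y z
    exact hasMonoMatching_of_encard_le_three hN va vb hab fun z vz az bz =>
      (h z vz az bz).imp (by simp) fun h => .inl (by simpa using h)

open Classical in
theorem IsRainbowFreeColoring.isStarColoring_recolor_one {n : ℕ}
    (hc : IsRainbowFreeColoring G K₄ c) (hn : ∀ e, n < c e)
    (hN : (G.neighborSet v).encard ≤ 3) (va : G.Adj v a) (vb : G.Adj v b) (hab : a ≠ b)
    (h : ∀ z, G.Adj v z → G.Adj a z → G.Adj b z →
      c s(v, b) = c s(a, z) ∨ c s(v, z) = c s(a, b)) :
    IsStarColoring G c v (fun w => if w = a then n else c s(v, w)) := by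
  refine hc.isStarColoring_of_lt_or_eq hn (by grind) (fun w z _ _ heq hlt => ?_) ?_
  · have hvw := hn s(v, w)
    have hvz := hn s(v, z)
    grind
  · intro x y z
    exact hasMonoMatching_of_encard_le_three hN va vb hab fun z vz az bz =>
      .inr (by simpa [hab.symm, az.ne'] using h z vz az bz)

theorem IsRainbowFreeColoring.triangle_trichotomy (hc : IsRainbowFreeColoring G K₄ c)
    (hN : (G.neighborSet v).encard ≤ 3) (va : G.Adj v a) (vb : G.Adj v b) (ab : G.Adj a b) :
    (∀ z, G.Adj v z → G.Adj a z → G.Adj b z → c s(v, a) = c s(b, z)) ∨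
    (∀ z, G.Adj v z → G.Adj a z → G.Adj b z → c s(v, b) = c s(a, z)) ∨
    (∀ z, G.Adj v z → G.Adj a z → G.Adj b z → c s(v, z) = c s(a, b)) := by
  by_contra! ⟨⟨x, vx, ax, bx, hx⟩, ⟨y, vy, ay, by', hy⟩, ⟨z, vz, az, bz, hz⟩⟩
  obtain rfl := eq_of_encard_le_three hN va vb vx vy ab.ne ax.ne' bx.ne' ay.ne' by'.ne'
  obtain rfl := eq_of_encard_le_three hN va vb vx vz ab.ne ax.ne' bx.ne' az.ne' bz.ne'
  rcases (hc.isStarColoring v).mono a b x va vb vx ab ax bx with h | h | h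
  · exact hx h
  · exact hy h
  · exact hz h

theorem IsRainbowFreeColoring.apply_ne_apply_of_common_adj {w : V}
    (hc : IsRainbowFreeColoring G K₄ c) (huv : u ≠ v) (uw : G.Adj u w) (vw : G.Adj v w) :
    c s(u, w) ≠ c s(v, w) :=
  Sym2.eq_swap (a := v) ▸ (hc.isStarColoring u).ne w v uw vw.symm huv.symm

theorem IsRainbowFreeColoring.exists_sup_edge_of_forall_not_adj
    (hc : IsRainbowFreeColoring G K₄ c) (hn : ∀ e, 0 < c e) (huv : u ≠ v)
    (hadj : ∀ a b, G.Adj u a → G.Adj v a → G.Adj u b → G.Adj v b → ¬ G.Adj a b) :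
    ∃ d, IsRainbowFreeColoring (G ⊔ edge u v) K₄ d :=
  hc.exists_sup_edge (hc.isStarColoring u) (hc.isStarColoring v)
    (fun _ _ => (hn _).ne') (fun _ _ => (hn _).ne')
    (fun _ uw vw => hc.apply_ne_apply_of_common_adj huv uw vw)
    (fun w z uw vw uz vz wz => absurd wz (hadj w z uw vw uz vz))

theorem IsRainbowFreeColoring.exists_sup_edge_of_keep_one (hc : IsRainbowFreeColoring G K₄ c)
    (hn : ∀ e, 2 ≤ c e) (hu : (G.neighborSet u).encard ≤ 3) (hv : (G.neighborSet v).encard ≤ 3)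
    (ua : G.Adj u a) (ub : G.Adj u b) (va : G.Adj v a) (vb : G.Adj v b) (ab : G.Adj a b)
    (hua : ∀ z, G.Adj u z → G.Adj a z → G.Adj b z → c s(u, a) = c s(b, z))
    (hvb : ∀ z, G.Adj v z → G.Adj a z → G.Adj b z → c s(v, b) = c s(a, z)) :
    ∃ d, IsRainbowFreeColoring (G ⊔ edge u v) K₄ d := by
  -- `ub` gets the same fresh color as the edges from `v` to all neighbors but `a` and `b`;
  -- likewise `va` and the edges at `u`.
  have hp := hc.isStarColoring_keep_one hn Nat.zero_lt_two Nat.one_lt_two Nat.zero_ne_one hu ua ub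
    ab.ne hua
  have hq := hc.isStarColoring_keep_one hn Nat.one_lt_two Nat.zero_lt_two Nat.one_ne_zero hv vb va
    ab.ne' fun z vz bz az => hvb z vz az bz
  have hk := hn s(a, b)
  have hpa := hn s(u, a)
  have hqb := hn s(v, b)
  have hpk : c s(u, a) ≠ c s(a, b) := (hc.isStarColoring u).ne a b ua ab ub.ne'
  have hqk : c s(v, b) ≠ c s(a, b) := hc.apply_ne_apply_of_common_adj va.ne vb ab
  refine hc.exists_sup_edge (k := c s(a, b)) hp hq (by grind) (by grind) (by grind) ?_
  intro w z uw _ uz _ wz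
  by_cases hwa : w = a
  · subst hwa
    by_cases hzb : z = b
    · exact .inl (hzb ▸ rfl)
    · exact .inr (.inr (by simp [hzb, ab.ne, wz.ne']))
  by_cases hwb : w = b
  · subst hwb
    by_cases hza : z = a
    · exact .inl (hza ▸ congrArg c Sym2.eq_swap)
    · exact .inr (.inl (by simp [hza, hwa, wz.ne']))
  by_cases hza : z = a
  · exact .inr (.inl (by simp [hza, hwa, hwb, ab.ne]))
  by_cases hzb : z = b
  · exact .inr (.inr (by simp [hzb, hwa, hwb, ab.ne']))
  exact absurd (eq_of_encard_le_three hu ua ub uw uz ab.ne hwa hwb hza hzb) wz.ne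

theorem IsRainbowFreeColoring.exists_sup_edge_of_keep_two (hc : IsRainbowFreeColoring G K₄ c)
    (hn : ∀ e, 0 < c e) (huv : u ≠ v)
    (hu : (G.neighborSet u).encard ≤ 3) (hv : (G.neighborSet v).encard ≤ 3)
    (ua : G.Adj u a) (ub : G.Adj u b) (va : G.Adj v a) (vb : G.Adj v b) (ab : G.Adj a b)
    (hab : ∀ z, G.Adj u z → G.Adj v z → z = a ∨ z = b)
    (hcu : ∀ z, G.Adj u z → G.Adj a z → G.Adj b z → c s(u, a) = c s(b, z) ∨ c s(u, b) = c s(a, z))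
    (hcv : ∀ z, G.Adj v z → G.Adj a z → G.Adj b z →
      c s(v, a) = c s(b, z) ∨ c s(v, b) = c s(a, z)) :
    ∃ d, IsRainbowFreeColoring (G ⊔ edge u v) K₄ d := by
  have hp := hc.isStarColoring_keep_two hn hu ua ub ab.ne hcu
  have hq := hc.isStarColoring_keep_two hn hv va vb ab.ne hcv
  have hk := hn s(a, b)
  have hne : ∀ {w}, G.Adj w a → G.Adj w b → c s(w, a) ≠ c s(a, b) ∧ c s(w, b) ≠ c s(a, b) :=
    fun {w} wa wb => ⟨(hc.isStarColoring w).ne a b wa ab wb.ne',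
      hc.apply_ne_apply_of_common_adj wa.ne wb ab⟩
  have hune := hne ua ub
  have hvne := hne va vb
  refine hc.exists_sup_edge (k := c s(a, b)) hp hq (by grind) (by grind) ?_ ?_
  · intro w uw vw
    simpa only [hab w uw vw, if_true] using hc.apply_ne_apply_of_common_adj huv uw vw
  · intro w z uw vw uz vz wz
    refine .inl (congrArg c ?_)
    rcases hab w uw vw with rfl | rfl <;> rcases hab z uz vz with rfl | rfl
    · exact absurd rfl wz.ne
    · rfl
    · exact Sym2.eq_swap
    · exact absurd rfl wz.ne

theorem IsRainbowFreeColoring.exists_sup_edge_of_recolor_one (hc : IsRainbowFreeColoring G K₄ c)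
    (hn : ∀ e, 2 ≤ c e)
    (hu : (G.neighborSet u).encard ≤ 3) (hv : (G.neighborSet v).encard ≤ 3)
    (ua : G.Adj u a) (ub : G.Adj u b) (va : G.Adj v a) (vb : G.Adj v b) (ab : G.Adj a b)
    (hab : ∀ z, G.Adj u z → G.Adj v z → z = a ∨ z = b)
    (hcu : ∀ z, G.Adj u z → G.Adj a z → G.Adj b z → c s(u, b) = c s(a, z) ∨ c s(u, z) = c s(a, b))
    (hcv : ∀ z, G.Adj v z → G.Adj a z → G.Adj b z →
      c s(v, a) = c s(b, z) ∨ c s(v, z) = c s(a, b)) :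
    ∃ d, IsRainbowFreeColoring (G ⊔ edge u v) K₄ d := by
  have hpos : ∀ e, 0 < c e := fun e => two_pos.trans_le (hn e)
  have hp := hc.isStarColoring_recolor_one hpos hu ua ub ab.ne hcu
  have hq := hc.isStarColoring_recolor_one hpos hv vb va ab.ne' fun z vz bz az => by
    rw [Sym2.eq_swap (a := b) (b := a)]
    exact hcv z vz az bz
  refine hc.exists_sup_edge (k := 1) hp hq (by grind) (by grind) ?_ ?_
  · intro w uw vw
    rcases hab w uw vw with rfl | rfl
    · simpa [ab.ne] using (hpos _).ne
    · simpa [ab.ne'] using (hpos _).ne'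
  · intro w z uw vw uz vz wz
    rcases hab w uw vw with rfl | rfl <;> rcases hab z uz vz with rfl | rfl
    · exact absurd rfl wz.ne
    · exact .inr (.inl (by simp))
    · exact .inr (.inr (by simp))
    · exact absurd rfl wz.ne

theorem IsRainbowFreeColoring.exists_sup_edge_of_common_pair (hc : IsRainbowFreeColoring G K₄ c)
    (hn : ∀ e, 2 ≤ c e) (huv : u ≠ v)
    (hu : (G.neighborSet u).encard ≤ 3) (hv : (G.neighborSet v).encard ≤ 3)
    (ua : G.Adj u a) (ub : G.Adj u b) (va : G.Adj v a) (vb : G.Adj v b) (ab : G.Adj a b)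
    (hab : ∀ z, G.Adj u z → G.Adj v z → z = a ∨ z = b) :
    ∃ d, IsRainbowFreeColoring (G ⊔ edge u v) K₄ d := by
  have keep_two := hc.exists_sup_edge_of_keep_two (fun e => two_pos.trans_le (hn e)) huv hu hv
    ua ub va vb ab hab
  have recolor_a := hc.exists_sup_edge_of_recolor_one hn hu hv ua ub va vb ab hab
  have recolor_b := hc.exists_sup_edge_of_recolor_one hn hu hv ub ua vb va ab.symm
    fun z uz vz => (hab z uz vz).symm
  rw [Sym2.eq_swap (a := b) (b := a)] at recolor_b
  rcases hc.triangle_trichotomy hu ua ub ab with hua | hub | huz <;>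
    rcases hc.triangle_trichotomy hv va vb ab with hva | hvb | hvz
  · exact keep_two (fun z uz az bz => .inl (hua z uz az bz)) fun z vz az bz => .inl (hva z vz az bz)
  · exact keep_two (fun z uz az bz => .inl (hua z uz az bz)) fun z vz az bz => .inr (hvb z vz az bz)
  · exact recolor_b (fun z uz bz az => .inl (hua z uz az bz))
      fun z vz bz az => .inr (hvz z vz az bz)
  · exact keep_two (fun z uz az bz => .inr (hub z uz az bz)) fun z vz az bz => .inl (hva z vz az bz)
  · exact keep_two (fun z uz az bz => .inr (hub z uz az bz)) fun z vz az bz => .inr (hvb z vz az bz)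
  · exact recolor_a (fun z uz az bz => .inl (hub z uz az bz))
      fun z vz az bz => .inr (hvz z vz az bz)
  · exact recolor_a (fun z uz az bz => .inr (huz z uz az bz))
      fun z vz az bz => .inl (hva z vz az bz)
  · exact recolor_b (fun z uz bz az => .inr (huz z uz az bz))
      fun z vz bz az => .inl (hvb z vz az bz)
  · exact recolor_a (fun z uz az bz => .inr (huz z uz az bz))
      fun z vz az bz => .inr (hvz z vz az bz)

theorem IsRainbowFreeColoring.exists_sup_edge_of_common_triangle {d : V}
    (hc : IsRainbowFreeColoring G K₄ c) (hn : ∀ e, 2 ≤ c e)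
    (hu : (G.neighborSet u).encard ≤ 3) (hv : (G.neighborSet v).encard ≤ 3)
    (ua : G.Adj u a) (ub : G.Adj u b) (ud : G.Adj u d) (va : G.Adj v a) (vb : G.Adj v b)
    (vd : G.Adj v d) (ab : G.Adj a b) (ad : G.Adj a d) (bd : G.Adj b d)
    (hua : c s(u, a) = c s(b, d)) (hvb : c s(v, b) = c s(a, d)) :
    ∃ c', IsRainbowFreeColoring (G ⊔ edge u v) K₄ c' := by
  refine hc.exists_sup_edge_of_keep_one hn hu hv ua ub va vb ab (fun z uz az bz => ?_)
    fun z vz az bz => ?_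
  · rwa [eq_of_encard_le_three hu ua ub uz ud ab.ne az.ne' bz.ne' ad.ne' bd.ne']
  · rwa [eq_of_encard_le_three hv va vb vz vd ab.ne az.ne' bz.ne' ad.ne' bd.ne']

theorem IsRainbowFreeColoring.exists_sup_edge_of_common_triple {d : V}
    (hc : IsRainbowFreeColoring G K₄ c) (hn : ∀ e, 2 ≤ c e) (huv : u ≠ v)
    (hu : (G.neighborSet u).encard ≤ 3) (hv : (G.neighborSet v).encard ≤ 3)
    (ua : G.Adj u a) (ub : G.Adj u b) (ud : G.Adj u d) (va : G.Adj v a) (vb : G.Adj v b)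
    (vd : G.Adj v d) (ab : G.Adj a b) (hda : d ≠ a) (hdb : d ≠ b) :
    ∃ c', IsRainbowFreeColoring (G ⊔ edge u v) K₄ c' := by
  by_cases htriangle : G.Adj a d ∧ G.Adj b d
  · obtain ⟨ad, bd⟩ := htriangle
    have extend {i j k : V} :=
      hc.exists_sup_edge_of_common_triangle (a := i) (b := j) (d := k) hn hu hv
    have hne {w} := hc.apply_ne_apply_of_common_adj (w := w) huv
    rcases (hc.isStarColoring u).mono a b d ua ub ud ab ad bd with hua | hub | hud <;>
      rcases (hc.isStarColoring v).mono a b d va vb vd ab ad bd with hva | hvb | hvd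
    · exact absurd (hua.trans hva.symm) (hne ua va)
    · exact extend ua ub ud va vb vd ab ad bd hua hvb
    · exact extend ua ud ub va vd vb ad ab bd.symm (Sym2.eq_swap (a := b) ▸ hua) hvd
    · exact extend ub ua ud vb va vd ab.symm bd ad hub hva
    · exact absurd (hub.trans hvb.symm) (hne ub vb)
    · exact extend ub ud ua vb vd va bd ab.symm ad.symm (Sym2.eq_swap (a := a) ▸ hub)
        (Sym2.eq_swap (a := a) ▸ hvd)
    · exact extend ud ua ub vd va vb ad.symm bd.symm ab hud (Sym2.eq_swap (a := b) ▸ hva)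
    · exact extend ud ub ua vd vb va bd.symm ad.symm ab.symm (Sym2.eq_swap (a := a) ▸ hud)
        (Sym2.eq_swap (a := a) ▸ hvb)
    · exact absurd (hud.trans hvd.symm) (hne ud vd)
  · refine hc.exists_sup_edge_of_keep_one hn hu hv ua ub va vb ab (fun z uz az bz => ?_)
      fun z vz az bz => ?_
    · obtain rfl := eq_of_encard_le_three hu ua ub uz ud ab.ne az.ne' bz.ne' hda hdb
      exact absurd ⟨az, bz⟩ htriangle
    · obtain rfl := eq_of_encard_le_three hv va vb vz vd ab.ne az.ne' bz.ne' hda hdb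
      exact absurd ⟨az, bz⟩ htriangle

theorem IsRainbowFreeColoring.exists_sup_edge_of_encard_le_three
    (hc : IsRainbowFreeColoring G K₄ c) (huv : u ≠ v) (hu : (G.neighborSet u).encard ≤ 3)
    (hv : (G.neighborSet v).encard ≤ 3) :
    ∃ d, IsRainbowFreeColoring (G ⊔ edge u v) K₄ d := by
  have hc₂ : IsRainbowFreeColoring G K₄ ((· + 2) ∘ c) :=
    hc.comp_injective (add_left_injective 2)
  have hn : ∀ e, 2 ≤ ((· + 2) ∘ c) e := fun e => Nat.le_add_left 2 (c e)
  by_cases hadj : ∀ a b, G.Adj u a → G.Adj v a → G.Adj u b → G.Adj v b → ¬ G.Adj a b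
  · exact hc₂.exists_sup_edge_of_forall_not_adj (fun e => two_pos.trans_le (hn e)) huv hadj
  push Not at hadj
  obtain ⟨a, b, ua, va, ub, vb, ab⟩ := hadj
  by_cases hab : ∀ z, G.Adj u z → G.Adj v z → z = a ∨ z = b
  · exact hc₂.exists_sup_edge_of_common_pair hn huv hu hv ua ub va vb ab hab
  push Not at hab
  obtain ⟨z, uz, vz, hza, hzb⟩ := hab
  exact hc₂.exists_sup_edge_of_common_triple hn huv hu hv ua ub uz va vb vz ab hza hzb

end Colorings

theorem stmt_8_general {V : Type} (G : SimpleGraph V) (hsat : IsRainbowSat G K₄) :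
    G.IsClique {v : V | (G.neighborSet v).encard ≤ 3} := by
  obtain ⟨⟨c, hproper, hfree⟩, hsat⟩ := hsat
  intro u hu v hv huv
  by_contra hadj
  obtain ⟨d, hd⟩ :=
    IsRainbowFreeColoring.exists_sup_edge_of_encard_le_three ⟨hproper, hfree⟩ huv hu hv
  exact hd.not_hasRainbowCopy (hsat u v huv hadj d hd.proper)

/-- In a rainbow `K_4`-saturated graph, the vertices of degree at most 3
form a clique. -/
theorem stmt_8 {V : Type} [Fintype V] (G : SimpleGraph V)
    (hsat : IsRainbowSat G (⊤ : SimpleGraph (Fin 4))) :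
    G.IsClique {v : V | (G.neighborSet v).ncard ≤ 3} := by
  refine (stmt_8_general G hsat).subset fun v (hv : (G.neighborSet v).ncard ≤ 3) => ?_
  rw [Set.mem_ofPred_eq, ← (Set.toFinite _).cast_ncard_eq]
  exact_mod_cast hv
end

section
/- Fix 0 < α < 1/2 and let G be an n-vertex rainbow K_4-saturated graph with α²n ≥ 7. Then either G has at least (7/2)n − 4αn edges, or G contains a dominating set D with |D| ≤ 2αn satisfying one of the following: (1) every vertex outside D has at least 3 neighbors in D; or (2) every vertex outside D has at least 2 neighbors in D, and there exist adjacent vertices x, y ∈ D such that every vertex outside D is adjacent to both x and y. -/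
open SimpleGraph

/-!
Colouring an added edge `uv` with a fresh colour leaves every new rainbow copy of `H` using `uv`,
so a rainbow `H`-saturated graph is semisaturated; for `H = K₄` this says that nonadjacent `u`, `v`
have two adjacent common neighbours. Hence a set `D` containing a closed neighbourhood `N[v]` is
2-dominating, and a vertex outside `D` with only two neighbours in `D` has both of them in `N(v)`.

Let `v` be a vertex of degree at most 6, which exists by edge counting, and call a vertex light if
its degree is small. If `N[v]` together with the few non-light vertices fails to be as required,
there are a light `p` with only two neighbours in `N[v]`, and a light `q` missing one of them. Now
`N[v] ∪ N[p] ∪ N[q]` is 3-dominating: an outside vertex with only two neighbours in it would have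
both of them adjacent to `v`, `p` and `q`, and these would be the two neighbours of `p` in `N[v]`.
-/

section Semisaturation

/-- `G` is `H`-semisaturated: adding any missing edge `uv` creates a copy of `H` that uses `uv`.
The graph `G` itself may contain copies of `H`. -/
def IsSemisaturated {V W : Type*} (G : SimpleGraph V) (H : SimpleGraph W) : Prop :=
  ∀ ⦃u v : V⦄, u ≠ v → ¬ G.Adj u v →
    ∃ f : Copy H (G ⊔ edge u v), ∃ a b, H.Adj a b ∧ f a = u ∧ f b = v

theorem mem_edgeSet_of_mem_edgeSet_sup_edge {V : Type*} {G : SimpleGraph V} {u v : V} {e : Sym2 V}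
    (he : e ∈ (G ⊔ edge u v).edgeSet) (hne : e ≠ s(u, v)) : e ∈ G.edgeSet := by
  rw [edgeSet_sup] at he
  exact he.resolve_right fun h ↦ hne (edgeSet_edge_subset h)

theorem IsProperEdgeColoring.sup_edge {V : Type} [DecidableEq V] {G : SimpleGraph V}
    {c : Sym2 V → ℕ} (hc : IsProperEdgeColoring G c) (u v : V) :
    IsProperEdgeColoring (G ⊔ edge u v) (Function.update (fun e ↦ c e + 1) s(u, v) 0) := by
  intro e₁ he₁ e₂ he₂ hne hshare
  by_cases h₁ : e₁ = s(u, v)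
  · have h₂ : e₂ ≠ s(u, v) := fun h ↦ hne (h₁.trans h.symm)
    simp [h₁, h₂]
  by_cases h₂ : e₂ = s(u, v)
  · simp [h₁, h₂]
  simpa [h₁, h₂] using hc e₁ (mem_edgeSet_of_mem_edgeSet_sup_edge he₁ h₁) e₂
    (mem_edgeSet_of_mem_edgeSet_sup_edge he₂ h₂) hne hshare

theorem IsRainbowSat.isSemisaturated {V W : Type} {G : SimpleGraph V} {H : SimpleGraph W}
    (hG : IsRainbowSat G H) : IsSemisaturated G H := by
  classical
  obtain ⟨⟨c, hc, hfree⟩, hsat⟩ := hG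
  intro u v huv hadj
  obtain ⟨f, hf, hfadj, hrainbow⟩ := hsat u v huv hadj _ (hc.sup_edge u v)
  refine ⟨⟨⟨f, hfadj _ _⟩, hf⟩, ?_⟩
  by_contra! havoid
  have hne : ∀ e ∈ H.edgeSet, Sym2.map f e ≠ s(u, v) := by
    intro e he hmap
    induction e with
    | _ a b =>
      obtain ⟨ha, hb⟩ | ⟨ha, hb⟩ := Sym2.eq_iff.1 hmap
      · exact havoid a b he ha hb
      · exact havoid b a he.symm hb ha
  refine hfree ⟨f, hf, fun a b hab ↦
    mem_edgeSet_of_mem_edgeSet_sup_edge (hfadj a b hab) (hne s(a, b) hab), ?_⟩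
  intro e₁ he₁ e₂ he₂ h
  simpa [hne e₁ he₁, hne e₂ he₂] using hrainbow e₁ he₁ e₂ he₂ h

theorem IsSemisaturated.exists_isNClique_subset_commonNeighbors {V W : Type*} [Fintype W]
    {G : SimpleGraph V} (hG : IsSemisaturated G (⊤ : SimpleGraph W)) {u v : V} (huv : u ≠ v)
    (hadj : ¬ G.Adj u v) :
    ∃ s : Finset V, G.IsNClique (Fintype.card W - 2) s ∧ ↑s ⊆ G.commonNeighbors u v := by
  classical
  obtain ⟨f, a, b, hab, hfa, hfb⟩ := hG huv hadj
  have hfadj : ∀ {i j : W}, i ≠ j → j ≠ a → j ≠ b → G.Adj (f i) (f j) := by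
    intro i j hij hja hjb
    refine mem_edgeSet_of_mem_edgeSet_sup_edge (e := s(f i, f j)) (f.toHom.map_adj hij) fun h ↦ ?_
    have hj : f j ∈ s(u, v) := h ▸ Sym2.mem_mk_right (f i) (f j)
    obtain hju | hjv := Sym2.mem_iff.1 hj
    · exact hja (f.injective (hju.trans hfa.symm))
    · exact hjb (f.injective (hjv.trans hfb.symm))
  set s : Finset V := ({a, b}ᶜ : Finset W).image f
  have hmem : ∀ {x : V}, x ∈ s ↔ ∃ i, (i ≠ a ∧ i ≠ b) ∧ f i = x := by
    simp only [s, Finset.mem_image, Finset.mem_compl, Finset.mem_insert, Finset.mem_singleton,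
      not_or, implies_true]
  refine ⟨s, ⟨fun x hx y hy hxy ↦ ?_, ?_⟩, fun x hx ↦ ?_⟩
  · obtain ⟨i, -, rfl⟩ := hmem.1 hx
    obtain ⟨j, ⟨hja, hjb⟩, rfl⟩ := hmem.1 hy
    exact hfadj (fun h ↦ hxy (h ▸ rfl)) hja hjb
  · exact (Finset.card_image_of_injective _ f.injective).trans <| by
      rw [Finset.card_compl, Finset.card_pair hab.ne]
  · obtain ⟨i, ⟨hia, hib⟩, rfl⟩ := hmem.1 hx
    rw [mem_commonNeighbors]
    exact ⟨by simpa only [hfa] using hfadj hia.symm hia hib,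
      by simpa only [hfb] using hfadj hib.symm hia hib⟩

theorem IsSemisaturated.exists_adj_pair_subset_commonNeighbors {V : Type*} {G : SimpleGraph V}
    (hG : IsSemisaturated G (⊤ : SimpleGraph (Fin 4))) {u v : V} (huv : u ≠ v)
    (hadj : ¬ G.Adj u v) : ∃ x y, G.Adj x y ∧ {x, y} ⊆ G.commonNeighbors u v := by
  classical
  obtain ⟨s, hs, hsub⟩ := hG.exists_isNClique_subset_commonNeighbors huv hadj
  obtain ⟨x, y, hxy, rfl⟩ := Finset.card_eq_two.1 hs.card_eq
  exact ⟨x, y, hs.isClique (by simp) (by simp) hxy, by simpa using hsub⟩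

end Semisaturation

section Domination

variable {V : Type*} {G : SimpleGraph V} {D : Set V} {p q u v : V}

/-- The closed neighbourhood `N[v]`: the vertex `v` and its neighbours. -/
def closedNeighborSet (G : SimpleGraph V) (v : V) : Set V :=
  insert v (G.neighborSet v)

/-- `D` is `k`-dominating: each vertex outside `D` has at least `k` neighbours in `D`. The number of
neighbours is an `ncard`, so this is meant for graphs in which these neighbour sets are finite. -/
def IsKDominating (G : SimpleGraph V) (k : ℕ) (D : Set V) : Prop :=
  ∀ v ∉ D, k ≤ (G.neighborSet v ∩ D).ncard

/-- `D` contains an edge `xy` complete to the complement of `D`: each vertex outside `D` is adjacent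
to both `x` and `y`. -/
def HasEdgeCompleteToCompl (G : SimpleGraph V) (D : Set V) : Prop :=
  ∃ x ∈ D, ∃ y ∈ D, G.Adj x y ∧ ∀ v ∉ D, G.Adj v x ∧ G.Adj v y

theorem ncard_closedNeighborSet [Fintype V] [DecidableRel G.Adj] (v : V) :
    (closedNeighborSet G v).ncard = G.degree v + 1 := by
  rw [closedNeighborSet, Set.ncard_insert_of_notMem (G.notMem_neighborSet_self),
    Set.ncard_eq_toFinset_card', Set.toFinset_card, card_neighborSet_eq_degree]

theorem IsSemisaturated.exists_adj_pair_subset_neighborSet_inter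
    (hG : IsSemisaturated G (⊤ : SimpleGraph (Fin 4))) (hv : closedNeighborSet G v ⊆ D)
    (hu : u ∉ D) : ∃ x y, G.Adj x y ∧ {x, y} ⊆ G.neighborSet u ∩ D ∧ {x, y} ⊆ G.neighborSet v := by
  obtain ⟨hne, hadj⟩ : u ≠ v ∧ ¬ G.Adj v u := not_or.1 (mt (@hv u) hu)
  obtain ⟨x, y, hxy, hsub⟩ := hG.exists_adj_pair_subset_commonNeighbors hne (mt Adj.symm hadj)
  obtain ⟨hsubu, hsubv⟩ := Set.subset_inter_iff.1 hsub
  exact ⟨x, y, hxy,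
    Set.subset_inter hsubu (hsubv.trans ((Set.subset_insert v _).trans hv)), hsubv⟩

theorem IsSemisaturated.hasEdgeCompleteToCompl
    (hG : IsSemisaturated G (⊤ : SimpleGraph (Fin 4))) (hv : closedNeighborSet G v ⊆ D)
    (hp : p ∉ closedNeighborSet G v)
    (hD : ∀ u ∉ D, G.neighborSet p ∩ closedNeighborSet G v ⊆ G.neighborSet u) :
    HasEdgeCompleteToCompl G D := by
  obtain ⟨x, y, hxy, hsub, -⟩ := hG.exists_adj_pair_subset_neighborSet_inter subset_rfl hp
  have hx := hsub (Set.mem_insert x {y})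
  have hy := hsub (Set.mem_insert_of_mem x rfl)
  exact ⟨x, hv hx.2, y, hv hy.2, hxy, fun u hu ↦ ⟨hD u hu hx, hD u hu hy⟩⟩

variable [Finite V]

theorem IsSemisaturated.isKDominating_two (hG : IsSemisaturated G (⊤ : SimpleGraph (Fin 4)))
    (hv : closedNeighborSet G v ⊆ D) : IsKDominating G 2 D := by
  intro u hu
  obtain ⟨x, y, hxy, hsub, -⟩ := hG.exists_adj_pair_subset_neighborSet_inter hv hu
  exact Set.ncard_pair hxy.ne ▸ Set.ncard_le_ncard hsub

theorem IsSemisaturated.neighborSet_inter_subset_neighborSet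
    (hG : IsSemisaturated G (⊤ : SimpleGraph (Fin 4))) (hv : closedNeighborSet G v ⊆ D)
    (hu : u ∉ D) (hcard : (G.neighborSet u ∩ D).ncard ≤ 2) :
    G.neighborSet u ∩ D ⊆ G.neighborSet v := by
  obtain ⟨x, y, hxy, hsub, hsubv⟩ := hG.exists_adj_pair_subset_neighborSet_inter hv hu
  rwa [← Set.eq_of_subset_of_ncard_le hsub (by rwa [Set.ncard_pair hxy.ne])]

theorem IsSemisaturated.isKDominating_three_union
    (hG : IsSemisaturated G (⊤ : SimpleGraph (Fin 4)))
    (hp : (G.neighborSet p ∩ closedNeighborSet G v).ncard ≤ 2)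
    (hq : ¬ G.neighborSet p ∩ closedNeighborSet G v ⊆ G.neighborSet q) :
    IsKDominating G 3 (closedNeighborSet G v ∪ closedNeighborSet G p ∪ closedNeighborSet G q) := by
  set D := closedNeighborSet G v ∪ closedNeighborSet G p ∪ closedNeighborSet G q
  have hvD : closedNeighborSet G v ⊆ D := fun _ h ↦ .inl (.inl h)
  have hpD : closedNeighborSet G p ⊆ D := fun _ h ↦ .inl (.inr h)
  have hqD : closedNeighborSet G q ⊆ D := fun _ h ↦ .inr h
  intro u hu
  by_contra! hlt
  have hcard : (G.neighborSet u ∩ D).ncard ≤ 2 := Nat.le_of_lt_succ hlt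
  have hsub : G.neighborSet u ∩ D ⊆ G.neighborSet p ∩ closedNeighborSet G v :=
    Set.subset_inter (hG.neighborSet_inter_subset_neighborSet hpD hu hcard)
      ((hG.neighborSet_inter_subset_neighborSet hvD hu hcard).trans (Set.subset_insert v _))
  have heq : G.neighborSet u ∩ D = G.neighborSet p ∩ closedNeighborSet G v :=
    Set.eq_of_subset_of_ncard_le hsub (hp.trans (hG.isKDominating_two hvD u hu))
  exact hq (heq ▸ hG.neighborSet_inter_subset_neighborSet hqD hu hcard)

end Domination

section DegreeCounting

variable {V : Type*} [Fintype V] {G : SimpleGraph V} [DecidableRel G.Adj]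

theorem IsSemisaturated.exists_dominating_ncard_le
    (hG : IsSemisaturated G (⊤ : SimpleGraph (Fin 4))) (v : V) (d : ℕ) :
    ∃ D : Set V, D.ncard ≤ G.degree v + 1 + max {u | d < G.degree u}.ncard (2 * (d + 1)) ∧
      (IsKDominating G 3 D ∨ IsKDominating G 2 D ∧ HasEdgeCompleteToCompl G D) := by
  set heavy : Set V := {u | d < G.degree u}
  set D₀ := closedNeighborSet G v ∪ heavy
  have hvD₀ : closedNeighborSet G v ⊆ D₀ := Set.subset_union_left
  have hD₀ : D₀.ncard ≤ G.degree v + 1 + max heavy.ncard (2 * (d + 1)) := by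
    have hunion : D₀.ncard ≤ _ := Set.ncard_union_le (closedNeighborSet G v) heavy
    rw [ncard_closedNeighborSet] at hunion
    omega
  by_cases hthree : ∀ p ∉ D₀, 3 ≤ (G.neighborSet p ∩ closedNeighborSet G v).ncard
  · exact ⟨D₀, hD₀, .inl fun p hp ↦ (hthree p hp).trans
      (Set.ncard_le_ncard (Set.inter_subset_inter_right _ hvD₀))⟩
  push Not at hthree
  obtain ⟨p, hpD₀, hp⟩ := hthree
  by_cases hedge : ∀ q ∉ D₀, G.neighborSet p ∩ closedNeighborSet G v ⊆ G.neighborSet q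
  · exact ⟨D₀, hD₀, .inr ⟨hG.isKDominating_two hvD₀,
      hG.hasEdgeCompleteToCompl hvD₀ (mt (@hvD₀ p) hpD₀) hedge⟩⟩
  push Not at hedge
  obtain ⟨q, hqD₀, hq⟩ := hedge
  refine ⟨_, ?_, .inl (hG.isKDominating_three_union (Nat.le_of_lt_succ hp) hq)⟩
  have hpd : G.degree p ≤ d := not_lt.1 (not_or.1 hpD₀).2
  have hqd : G.degree q ≤ d := not_lt.1 (not_or.1 hqD₀).2
  have hunion := Set.ncard_union_le (closedNeighborSet G v ∪ closedNeighborSet G p)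
    (closedNeighborSet G q)
  have hunion' := Set.ncard_union_le (closedNeighborSet G v) (closedNeighborSet G p)
  simp only [ncard_closedNeighborSet] at hunion hunion'
  omega

theorem ncard_setOf_le_degree_mul_le (G : SimpleGraph V) [DecidableRel G.Adj] (d : ℕ) :
    {u | d ≤ G.degree u}.ncard * d ≤ 2 * G.edgeSet.ncard := by
  rw [← coe_edgeFinset, Set.ncard_coe_finset, ← G.sum_degrees_eq_twice_card_edges,
    ← Finset.coe_filter_univ, Set.ncard_coe_finset, ← smul_eq_mul]
  exact (Finset.card_nsmul_le_sum _ _ d fun u hu ↦ (Finset.mem_filter.1 hu).2).trans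
    (Finset.sum_le_univ_sum_of_nonneg fun _ ↦ Nat.zero_le _)

theorem exists_degree_lt_of_two_mul_ncard_edgeSet_lt {d : ℕ}
    (h : 2 * G.edgeSet.ncard < Fintype.card V * d) : ∃ v, G.degree v < d := by
  by_contra! hdeg
  have hle := ncard_setOf_le_degree_mul_le G d
  rw [Set.eq_univ_of_forall (s := {u | d ≤ G.degree u}) hdeg, Set.ncard_univ,
    Nat.card_eq_fintype_card] at hle
  exact h.not_ge hle

theorem ncard_setOf_lt_degree_le_of_two_mul_ncard_edgeSet_le {d : ℕ} {m : ℝ}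
    (h : 2 * (G.edgeSet.ncard : ℝ) ≤ m * (d + 1)) : ({u | d < G.degree u}.ncard : ℝ) ≤ m := by
  have hle : ({u | d < G.degree u}.ncard : ℝ) * (d + 1) ≤ 2 * G.edgeSet.ncard := by
    exact_mod_cast ncard_setOf_le_degree_mul_le G (d + 1)
  exact le_of_mul_le_mul_right (hle.trans h) (by positivity)

end DegreeCounting

theorem stmt_9_general {V : Type*} [Fintype V] (α : ℝ) (hα : 0 < α)
    (hV : 7 ≤ α ^ 2 * (Fintype.card V : ℝ)) (G : SimpleGraph V)
    (hG : IsSemisaturated G (⊤ : SimpleGraph (Fin 4))) :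
    7 / 2 * (Fintype.card V : ℝ) - 4 * α * (Fintype.card V : ℝ) ≤ (G.edgeSet.ncard : ℝ) ∨
    ∃ D : Set V, (D.ncard : ℝ) ≤ 2 * α * (Fintype.card V : ℝ) ∧
      (IsKDominating G 3 D ∨ IsKDominating G 2 D ∧ HasEdgeCompleteToCompl G D) := by
  classical
  obtain hα_ge | hα_lt := le_or_gt (1 / 2) α
  · refine .inr ⟨Set.univ, ?_, .inl fun v hv ↦ (hv trivial).elim⟩
    rw [Set.ncard_univ, Nat.card_eq_fintype_card]
    nlinarith
  refine or_iff_not_imp_left.2 fun hedges ↦ ?_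
  set N : ℝ := (Fintype.card V : ℝ)
  have hm : 14 ≤ α * N := by nlinarith
  have hm_sq : 7 * N ≤ (α * N) ^ 2 := by nlinarith
  obtain ⟨v, hv⟩ : ∃ v, G.degree v < 7 := exists_degree_lt_of_two_mul_ncard_edgeSet_lt <| by
    rify
    linarith
  obtain ⟨d, hd_le, hd_lt⟩ : ∃ d : ℕ, d ≤ α * N - 7 ∧ α * N - 7 < d + 1 :=
    ⟨_, Nat.floor_le (by linarith), Nat.lt_floor_add_one _⟩
  have hheavy : ({u | d < G.degree u}.ncard : ℝ) ≤ α * N :=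
    ncard_setOf_lt_degree_le_of_two_mul_ncard_edgeSet_le <| calc
      2 * (G.edgeSet.ncard : ℝ) ≤ α * N * (α * N - 7) := by linarith
      _ ≤ α * N * (d + 1) := by gcongr
  obtain ⟨D, hD, hdom⟩ := hG.exists_dominating_ncard_le v d
  have hmax : (max {u | d < G.degree u}.ncard (2 * (d + 1)) : ℕ) ≤ 2 * α * N - 7 := by
    push_cast
    exact max_le (by linarith) (by linarith)
  refine ⟨D, ?_, hdom⟩
  calc (D.ncard : ℝ)
    _ ≤ 7 + (max {u | d < G.degree u}.ncard (2 * (d + 1)) : ℕ) := by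
      exact_mod_cast hD.trans (Nat.add_le_add_right hv _)
    _ ≤ 2 * α * N := by linarith

/-- A sparse rainbow `K_4`-saturated graph contains a small dominating set
which is 3-dominating, or 2-dominating with a special adjacent pair. -/
theorem stmt_9 (α : ℝ) (hα0 : 0 < α) (hα : α < 1 / 2) (n : ℕ)
    (hn : 7 ≤ α ^ 2 * (n : ℝ)) (G : SimpleGraph (Fin n))
    (hsat : IsRainbowSat G (⊤ : SimpleGraph (Fin 4))) :
    (7 / 2 * (n : ℝ) - 4 * α * (n : ℝ) ≤ (G.edgeSet.ncard : ℝ)) ∨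
    ∃ D : Set (Fin n), (D.ncard : ℝ) ≤ 2 * α * (n : ℝ) ∧
      ((∀ v ∉ D, 3 ≤ (G.neighborSet v ∩ D).ncard) ∨
       ((∀ v ∉ D, 2 ≤ (G.neighborSet v ∩ D).ncard) ∧
        ∃ x ∈ D, ∃ y ∈ D, G.Adj x y ∧ ∀ v ∉ D, G.Adj v x ∧ G.Adj v y)) := by
  simpa only [Fintype.card_fin, IsKDominating, HasEdgeCompleteToCompl] using
    stmt_9_general α hα0 (by simpa using hn) G hsat.isSemisaturated
end
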